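/- arXiv:2602.08721 — 2 statements merged into one kernel-verified Lean document; each statement's English description precedes it below -/
import Mathlib

section
/- The series identity ∑_{n≥1} (−1/4)^n · (1)_n / ((1/2)_n) · [ H_{2n}^{(2)}/n³ − 32/(5 n^5) ] = −(41/5) ζ(5) + (14/15) π² ζ(3) holds, where ζ is the Riemann zeta function. -/
/-- The rising factorial (Pochhammer symbol) `(a)ₙ = a(a+1)⋯(a+n-1)`. -/
noncomputable def risingFactorial (a : ℝ) (n : ℕ) : ℝ :=
  ∏ i ∈ Finset.range n, (a + i)

/-- The generalized harmonic number `H_n^{(s)} = ∑_{k=1}^n 1/k^s`. -/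
noncomputable def genHarmonic (s n : ℕ) : ℝ :=
  ∑ k ∈ Finset.range n, 1 / ((k : ℝ) + 1) ^ s

open Filter Topology PowerSeries

/-- Weighted `ℓ¹` size of the coefficients of degree at most three, with weight `10⁻⁴`. -/
noncomputable def truncNorm (f : ℝ⟦X⟧) : ℝ :=
  |coeff 0 f| + |coeff 1 f| / 10 ^ 4 + |coeff 2 f| / 10 ^ 8 + |coeff 3 f| / 10 ^ 12

lemma truncNorm_nonneg (f : ℝ⟦X⟧) : 0 ≤ truncNorm f := by
  unfold truncNorm; positivity

lemma truncNorm_add_le (f g : ℝ⟦X⟧) : truncNorm (f + g) ≤ truncNorm f + truncNorm g := by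
  have h := fun i => abs_add_le (coeff i f) (coeff i g)
  simp only [truncNorm, map_add]
  linarith [h 0, h 1, h 2, h 3]

lemma truncNorm_neg (f : ℝ⟦X⟧) : truncNorm (-f) = truncNorm f := by
  simp [truncNorm]

lemma truncNorm_sub_le (f g : ℝ⟦X⟧) : truncNorm (f - g) ≤ truncNorm f + truncNorm g := by
  rw [sub_eq_add_neg, ← truncNorm_neg g]; exact truncNorm_add_le _ _

lemma truncNorm_mul_le (f g : ℝ⟦X⟧) : truncNorm (f * g) ≤ truncNorm f * truncNorm g := by
  have e0 : coeff 0 (f * g) = coeff 0 f * coeff 0 g := by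
    simp [coeff_mul]
  have e1 : coeff 1 (f * g) = coeff 0 f * coeff 1 g + coeff 1 f * coeff 0 g := by
    simp [coeff_mul, Finset.Nat.antidiagonal_succ]
  have e2 : coeff 2 (f * g) = coeff 0 f * coeff 2 g + coeff 1 f * coeff 1 g
      + coeff 2 f * coeff 0 g := by
    rw [coeff_mul, Finset.Nat.sum_antidiagonal_eq_sum_range_succ_mk]
    simp [Finset.sum_range_succ]
  have e3 : coeff 3 (f * g) = coeff 0 f * coeff 3 g + coeff 1 f * coeff 2 g
      + coeff 2 f * coeff 1 g + coeff 3 f * coeff 0 g := by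
    rw [coeff_mul, Finset.Nat.sum_antidiagonal_eq_sum_range_succ_mk]
    simp [Finset.sum_range_succ]
  have b0 : |coeff 0 (f * g)| = |coeff 0 f| * |coeff 0 g| := by rw [e0, abs_mul]
  have b1 : |coeff 1 (f * g)| ≤ |coeff 0 f| * |coeff 1 g| + |coeff 1 f| * |coeff 0 g| := by
    rw [e1]; simp only [← abs_mul]; exact abs_add_le _ _
  have b2 : |coeff 2 (f * g)| ≤ |coeff 0 f| * |coeff 2 g| + |coeff 1 f| * |coeff 1 g|
      + |coeff 2 f| * |coeff 0 g| := by
    rw [e2]; simp only [← abs_mul]; exact abs_add_three _ _ _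
  have b3 : |coeff 3 (f * g)| ≤ |coeff 0 f| * |coeff 3 g| + |coeff 1 f| * |coeff 2 g|
      + |coeff 2 f| * |coeff 1 g| + |coeff 3 f| * |coeff 0 g| := by
    rw [e3]; simp only [← abs_mul]
    exact (abs_add_le _ _).trans (add_le_add_left (abs_add_three _ _ _) _)
  have p : ∀ i j, 0 ≤ |coeff i f| * |coeff j g| := fun i j => by positivity
  simp only [truncNorm]
  linarith [p 1 3, p 2 2, p 3 1, p 2 3, p 3 2, p 3 3]

lemma truncNorm_C (c : ℝ) : truncNorm (C c) = |c| := by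
  simp [truncNorm, coeff_C]

lemma truncNorm_natCast (n : ℕ) : truncNorm (n : ℝ⟦X⟧) = n := by
  rw [← map_natCast (C : ℝ →+* ℝ⟦X⟧), truncNorm_C, Nat.abs_cast]

lemma truncNorm_one : truncNorm 1 = 1 := by simpa using truncNorm_natCast 1

lemma truncNorm_X : truncNorm (X : ℝ⟦X⟧) = 1 / 10 ^ 4 := by
  simp [truncNorm, coeff_X]

lemma abs_coeff_le_truncNorm {i : ℕ} (hi : i ≤ 3) (f : ℝ⟦X⟧) :
    |coeff i f| ≤ 10 ^ 12 * truncNorm f := by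
  have p : ∀ i, 0 ≤ |coeff i f| := fun i => abs_nonneg _
  have := p 0; have := p 1; have := p 2; have := p 3
  unfold truncNorm
  interval_cases i <;> linarith

/-- `f` is the positive constant `c` up to a relative perturbation `η` in `truncNorm`. -/
structure NearConst (f : ℝ⟦X⟧) (c η : ℝ) : Prop where
  pos : 0 < c
  lt_one : η < 1
  const : constantCoeff f = c
  le : truncNorm (f - C c) ≤ c * η

namespace NearConst

lemma mul_inv {f : ℝ⟦X⟧} {c η : ℝ} (h : NearConst f c η) : f * f⁻¹ = 1 :=
  PowerSeries.mul_inv_cancel _ (by rw [h.const]; exact h.pos.ne')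

lemma norm_le {f : ℝ⟦X⟧} {c η : ℝ} (h : NearConst f c η) : truncNorm f ≤ c * (1 + η) := by
  have := truncNorm_add_le (f - C c) (C c)
  rw [sub_add_cancel, truncNorm_C, abs_of_pos h.pos] at this
  linarith [h.le]

lemma norm_inv_le {f : ℝ⟦X⟧} {c η : ℝ} (h : NearConst f c η) :
    truncNorm f⁻¹ ≤ c⁻¹ * (1 - η)⁻¹ := by
  have hc := h.pos
  have h5 : 0 < 1 - η := by linarith [h.lt_one]
  have e : C c * f⁻¹ = 1 - (f - C c) * f⁻¹ := by
    linear_combination h.mul_inv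
  have h4 : truncNorm (C c * f⁻¹) = c * truncNorm f⁻¹ := by
    simp only [truncNorm, coeff_C_mul, abs_mul, abs_of_pos hc]
    ring
  have h1 := truncNorm_sub_le 1 ((f - C c) * f⁻¹)
  have h2 := truncNorm_mul_le (f - C c) f⁻¹
  have h3 := mul_le_mul_of_nonneg_right h.le (truncNorm_nonneg f⁻¹)
  rw [← e, truncNorm_one, h4] at h1
  rw [← _root_.mul_inv, ← one_div, le_div_iff₀ (by positivity)]
  linarith

lemma of_eq_add_X_mul {f g : ℝ⟦X⟧} {c η : ℝ} (hc : 0 < c) (hη : η < 1)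
    (hf : f = C c + X * g) (hg : truncNorm g ≤ 10 ^ 4 * (c * η)) : NearConst f c η := by
  refine ⟨hc, hη, by simp [hf], ?_⟩
  rw [hf, add_sub_cancel_left]
  have := truncNorm_mul_le X g
  rw [truncNorm_X] at this
  linarith

end NearConst

/-- The linear factor `j + a X`. -/
noncomputable def linFactor (a : ℝ) (j : ℕ) : ℝ⟦X⟧ := (j : ℝ⟦X⟧) + C a * X

/-- The quadratic factor `j² + a j X + b X²`. -/
noncomputable def quadFactor (a b : ℝ) (j : ℕ) : ℝ⟦X⟧ :=
  (j : ℝ⟦X⟧) ^ 2 + C a * (j : ℝ⟦X⟧) * X + C b * X ^ 2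

lemma nearConst_linFactor {a : ℝ} (ha : |a| ≤ 8) {j : ℕ} (hj : 1 ≤ j) :
    NearConst (linFactor a j) j (1 / (500 * j)) := by
  have hj' : (1 : ℝ) ≤ j := by exact_mod_cast hj
  refine NearConst.of_eq_add_X_mul (g := C a) (by linarith) ?_ ?_ ?_
  · rw [div_lt_one (by positivity)]; linarith
  · simp [linFactor, mul_comm]
  · rw [truncNorm_C]
    have : 10 ^ 4 * ((j : ℝ) * (1 / (500 * j))) = 20 := by field_simp; norm_num
    rw [this]; linarith

lemma nearConst_quadFactor {a b : ℝ} (ha : |a| ≤ 10) (hb : |b| ≤ 56) {j : ℕ} (hj : 1 ≤ j) :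
    NearConst (quadFactor a b j) ((j : ℝ) ^ 2) (1 / (500 * j)) := by
  have hj' : (1 : ℝ) ≤ j := by exact_mod_cast hj
  refine NearConst.of_eq_add_X_mul (g := C (a * j) + C b * X) (by positivity) ?_ ?_ ?_
  · rw [div_lt_one (by positivity)]; linarith
  · simp only [quadFactor, map_pow, map_natCast, map_mul]; ring
  · have h1 := truncNorm_add_le (C (a * j)) (C b * X)
    have h2 := truncNorm_mul_le (C b) X
    rw [truncNorm_C, truncNorm_X] at h2
    rw [truncNorm_C, abs_mul, Nat.abs_cast] at h1
    have : 10 ^ 4 * ((j : ℝ) ^ 2 * (1 / (500 * j))) = 20 * j := by field_simp; norm_num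
    rw [this]
    nlinarith

lemma linFactor_ne_zero {a : ℝ} {j : ℕ} (hj : 1 ≤ j) : constantCoeff (linFactor a j) ≠ 0 := by
  simp [linFactor]; omega

lemma quadFactor_ne_zero {a b : ℝ} {j : ℕ} (hj : 1 ≤ j) :
    constantCoeff (quadFactor a b j) ≠ 0 := by
  simp [quadFactor]; omega

/-- Congruences modulo a power of `X` may be divided by an invertible series. -/
lemma dvd_sub_of_mul_dvd_sub {m : ℕ} {f p d : ℝ⟦X⟧} (hd : constantCoeff d ≠ 0)
    (h : X ^ m ∣ f * d - p * d) : X ^ m ∣ f - p := by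
  have := h.mul_right d⁻¹
  rwa [← sub_mul, mul_assoc, PowerSeries.mul_inv_cancel _ hd, mul_one] at this

lemma coeff_eq_of_X_pow_dvd_sub {m i : ℕ} {f p : ℝ⟦X⟧} (h : X ^ m ∣ f - p) (hi : i < m) :
    coeff i f = coeff i p := by
  have := X_pow_dvd_iff.1 h i hi
  rwa [map_sub, sub_eq_zero] at this

/-- Summation of a Wilf–Zeilberger pair along the two boundary lines. -/
theorem tendsto_sum_of_wz {f g : ℕ → ℕ → ℝ} {b : ℕ → ℝ}
    (h : ∀ n k, f n k - f (n + 1) k = g n k - g n (k + 1))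
    (hb : Summable b) (hf : ∀ n k, |f n k| ≤ b k)
    (hf0 : ∀ k, Tendsto (fun n => f n k) atTop (𝓝 0))
    (hg0 : ∀ n, Tendsto (fun k => g n k) atTop (𝓝 0)) :
    Tendsto (fun N => ∑ n ∈ Finset.range N, g n 0) atTop (𝓝 (∑' k, f 0 k)) := by
  have hs : ∀ n, Summable (f n) := fun n => Summable.of_norm_bounded hb (hf n)
  have key : ∀ n, g n 0 = ∑' k, f n k - ∑' k, f (n + 1) k := by
    intro n
    rw [← (hs n).tsum_sub (hs (n + 1))]
    have h1 : HasSum (fun k => f n k - f (n + 1) k) (∑' k, (f n k - f (n + 1) k)) :=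
      ((hs n).sub (hs (n + 1))).hasSum
    have h2 := h1.tendsto_sum_nat
    have h3 : (fun K => ∑ k ∈ Finset.range K, (f n k - f (n + 1) k))
        = fun K => g n 0 - g n K := by
      funext K
      simp only [h]
      exact Finset.sum_range_sub' (fun k => g n k) K
    rw [h3] at h2
    have h4 := (tendsto_const_nhds (x := g n 0)).sub (hg0 n)
    rw [sub_zero] at h4
    exact tendsto_nhds_unique h4 h2
  have hlim : Tendsto (fun n => ∑' k, f n k) atTop (𝓝 (∑' _ : ℕ, (0 : ℝ))) :=
    tendsto_tsum_of_dominated_convergence hb hf0 (Eventually.of_forall fun n k => hf n k)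
  rw [tsum_zero] at hlim
  have h5 : (fun N => ∑ n ∈ Finset.range N, g n 0)
      = fun N => ∑' k, f 0 k - ∑' k, f N k := by
    funext N
    simp only [key]
    exact Finset.sum_range_sub' (fun n => ∑' k, f n k) N
  rw [h5]
  simpa using (tendsto_const_nhds (x := ∑' k, f 0 k)).sub hlim

lemma truncNorm_linFactor_le {a : ℝ} (ha : |a| ≤ 8) {j : ℕ} (hj : 1 ≤ j) :
    truncNorm (linFactor a j) ≤ j + 1 / 500 := by
  have hj' : (1 : ℝ) ≤ j := by exact_mod_cast hj
  refine (nearConst_linFactor ha hj).norm_le.trans (le_of_eq ?_)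
  field_simp

lemma truncNorm_linFactor_inv_le {a : ℝ} (ha : |a| ≤ 8) {j : ℕ} (hj : 1 ≤ j) :
    truncNorm (linFactor a j)⁻¹ ≤ (j - 1 / 500 : ℝ)⁻¹ := by
  have hj' : (1 : ℝ) ≤ j := by exact_mod_cast hj
  refine (nearConst_linFactor ha hj).norm_inv_le.trans (le_of_eq ?_)
  rw [← mul_inv]
  congr 1
  field_simp

lemma truncNorm_quadFactor_le {a b : ℝ} (ha : |a| ≤ 10) (hb : |b| ≤ 56) {j : ℕ} (hj : 1 ≤ j) :
    truncNorm (quadFactor a b j) ≤ j * (j + 1 / 500) := by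
  have hj' : (1 : ℝ) ≤ j := by exact_mod_cast hj
  refine (nearConst_quadFactor ha hb hj).norm_le.trans (le_of_eq ?_)
  field_simp

lemma truncNorm_quadFactor_inv_le {a b : ℝ} (ha : |a| ≤ 10) (hb : |b| ≤ 56) {j : ℕ}
    (hj : 1 ≤ j) : truncNorm (quadFactor a b j)⁻¹ ≤ (j * (j - 1 / 500) : ℝ)⁻¹ := by
  have hj' : (1 : ℝ) ≤ j := by exact_mod_cast hj
  refine (nearConst_quadFactor ha hb hj).norm_inv_le.trans (le_of_eq ?_)
  rw [← mul_inv]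
  congr 1
  field_simp

lemma truncNorm_mul_le_of_le {f g : ℝ⟦X⟧} {a b : ℝ} (hf : truncNorm f ≤ a)
    (hg : truncNorm g ≤ b) : truncNorm (f * g) ≤ a * b :=
  (truncNorm_mul_le f g).trans
    (mul_le_mul hf hg (truncNorm_nonneg g) ((truncNorm_nonneg f).trans hf))

lemma linFactor_mul_inv {a : ℝ} {j : ℕ} (hj : 1 ≤ j) :
    linFactor a j * (linFactor a j)⁻¹ = 1 :=
  PowerSeries.mul_inv_cancel _ (linFactor_ne_zero hj)

lemma quadFactor_mul_inv {a b : ℝ} {j : ℕ} (hj : 1 ≤ j) :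
    quadFactor a b j * (quadFactor a b j)⁻¹ = 1 :=
  PowerSeries.mul_inv_cancel _ (quadFactor_ne_zero hj)

lemma sq_mul_cube_le_of_ratio {u r : ℕ → ℝ} (hu : ∀ k, 0 ≤ u k)
    (h : ∀ k, u (k + 1) ≤ u k * r k)
    (hr : ∀ k, r k ^ 2 * ((k : ℝ) + 2) ^ 3 ≤ ((k : ℝ) + 1) ^ 3) (k : ℕ) :
    u k ^ 2 * ((k : ℝ) + 1) ^ 3 ≤ u 0 ^ 2 := by
  induction k with
  | zero => simp
  | succ k ih =>
    refine le_trans ?_ ih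
    have h1 : u (k + 1) ^ 2 ≤ (u k * r k) ^ 2 := pow_le_pow_left₀ (hu _) (h k) 2
    have h2 : (((k + 1 : ℕ) : ℝ) + 1) ^ 3 = ((k : ℝ) + 2) ^ 3 := by push_cast; ring
    rw [h2]
    calc u (k + 1) ^ 2 * ((k : ℝ) + 2) ^ 3 ≤ (u k * r k) ^ 2 * ((k : ℝ) + 2) ^ 3 := by gcongr
      _ = u k ^ 2 * (r k ^ 2 * ((k : ℝ) + 2) ^ 3) := by ring
      _ ≤ _ := mul_le_mul_of_nonneg_left (hr k) (sq_nonneg _)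

lemma le_rpow_of_sq_mul_cube_le {x y M : ℝ} (hx : 0 < x) (hM : 0 ≤ M)
    (h : y ^ 2 * x ^ 3 ≤ M ^ 2) : y ≤ M * x ^ (-(3 / 2) : ℝ) := by
  refine le_of_abs_le (abs_le_of_sq_le_sq ?_ (by positivity))
  have : (M * x ^ (-(3 / 2) : ℝ)) ^ 2 = M ^ 2 / x ^ 3 := by
    rw [mul_pow, ← Real.rpow_natCast (x ^ _), ← Real.rpow_mul hx.le]
    norm_num
    rw [div_eq_mul_inv]
  rw [this, le_div_iff₀ (by positivity)]
  exact h

lemma summable_of_sq_mul_cube_le {u : ℕ → ℝ} {M : ℝ} (hM : 0 ≤ M) (hu : ∀ k, 0 ≤ u k)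
    (h : ∀ k : ℕ, u k ^ 2 * ((k : ℝ) + 1) ^ 3 ≤ M ^ 2) : Summable u := by
  have hs : Summable fun k : ℕ => M * ((k + 1 : ℕ) : ℝ) ^ (-(3 / 2) : ℝ) :=
    ((summable_nat_add_iff 1).2 (Real.summable_nat_rpow.2 (by norm_num))).mul_left M
  refine Summable.of_nonneg_of_le hu (fun k => ?_) hs
  push_cast
  exact le_rpow_of_sq_mul_cube_le (by positivity) hM (h k)

lemma tendsto_mul_of_sq_mul_cube_le {u : ℕ → ℝ} {M : ℝ} (hM : 0 ≤ M) (hu : ∀ k, 0 ≤ u k)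
    (h : ∀ k : ℕ, u k ^ 2 * ((k : ℝ) + 1) ^ 3 ≤ M ^ 2) :
    Tendsto (fun k : ℕ => ((k : ℝ) + 1) * u k) atTop (𝓝 0) := by
  have ht : Tendsto (fun k : ℕ => M * ((k : ℝ) + 1) ^ (-(1 / 2) : ℝ)) atTop (𝓝 (M * 0)) :=
    ((tendsto_rpow_neg_atTop (by norm_num)).comp
      (tendsto_atTop_add_const_right _ 1 tendsto_natCast_atTop_atTop)).const_mul M
  rw [mul_zero] at ht
  refine squeeze_zero (fun k => mul_nonneg (by positivity) (hu k)) (fun k => ?_) ht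
  have hk : (0 : ℝ) < (k : ℝ) + 1 := by positivity
  have h1 := mul_le_mul_of_nonneg_left (le_rpow_of_sq_mul_cube_le hk hM (h k)) hk.le
  refine h1.trans (le_of_eq ?_)
  have : ((k : ℝ) + 1) ^ (-(1 / 2) : ℝ) = ((k : ℝ) + 1) * ((k : ℝ) + 1) ^ (-(3 / 2) : ℝ) := by
    rw [← Real.rpow_one_add' hk.le (by norm_num)]; norm_num
  rw [this]; ring

lemma tendsto_zero_of_ratio {u : ℕ → ℝ} (hu : ∀ l, 0 ≤ u l)
    (h : ∀ l : ℕ, u (l + 1) ≤ u l * (((l : ℝ) + 3 / 2) / ((l : ℝ) + 2))) :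
    Tendsto u atTop (𝓝 0) := by
  have hb : ∀ l : ℕ, u l ^ 2 ≤ u 0 ^ 2 * 2 / ((l : ℝ) + 2) := by
    intro l
    induction l with
    | zero => simp
    | succ l ih =>
      have h1 : u (l + 1) ^ 2 ≤ (u l * (((l : ℝ) + 3 / 2) / ((l : ℝ) + 2))) ^ 2 :=
        pow_le_pow_left₀ (hu _) (h l) 2
      refine h1.trans ?_
      rw [mul_pow]
      refine (mul_le_mul_of_nonneg_right ih (sq_nonneg _)).trans ?_
      rw [div_pow, div_mul_div_comm, div_le_div_iff₀ (by positivity) (by positivity)]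
      have h0 : 0 ≤ u 0 ^ 2 * 2 := by positivity
      rw [mul_assoc (u 0 ^ 2 * 2)]
      refine mul_le_mul_of_nonneg_left ?_ h0
      have hl : (0 : ℝ) ≤ l := by positivity
      push_cast
      nlinarith [mul_nonneg hl hl, mul_nonneg (mul_nonneg hl hl) hl]
  have ht : Tendsto (fun l : ℕ => u 0 ^ 2 * 2 / ((l : ℝ) + 2)) atTop (𝓝 0) :=
    tendsto_const_nhds.div_atTop
      (tendsto_atTop_add_const_right _ 2 tendsto_natCast_atTop_atTop)
  have h2 : Tendsto (fun l => u l ^ 2) atTop (𝓝 0) :=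
    squeeze_zero (fun l => sq_nonneg _) hb ht
  have h3 := h2.sqrt
  simpa [Real.sqrt_sq (hu _)] using h3

/-- The Wilf–Zeilberger term behind the Gauss summation theorem, as a power series. -/
noncomputable def gaussTerm (l k : ℕ) : ℝ⟦X⟧ :=
  (∏ j ∈ Finset.range k, linFactor 8 (j + 1) * linFactor 2 (j + 1) * C ((j : ℝ) + 2)⁻¹) *
    (∏ j ∈ Finset.range l,
      linFactor (-2) (j + 1) * linFactor 4 (j + 1) * (linFactor (-4) (j + 1))⁻¹) *
    ∏ j ∈ Finset.range (l + k + 1), (linFactor 6 (j + 1))⁻¹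

lemma gaussTerm_succ_left (l k : ℕ) : gaussTerm (l + 1) k = gaussTerm l k *
    (linFactor (-2) (l + 1) * linFactor 4 (l + 1) * (linFactor (-4) (l + 1))⁻¹ *
      (linFactor 6 (l + k + 2))⁻¹) := by
  have : l + 1 + k + 1 = (l + k + 1) + 1 := by omega
  simp only [gaussTerm, this, Finset.prod_range_succ _ (l + k + 1), Finset.prod_range_succ _ l]
  ring

lemma gaussTerm_succ_right (l k : ℕ) : gaussTerm l (k + 1) = gaussTerm l k *
    (linFactor 8 (k + 1) * linFactor 2 (k + 1) * C ((k : ℝ) + 2)⁻¹ *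
      (linFactor 6 (l + k + 2))⁻¹) := by
  have : l + (k + 1) + 1 = (l + k + 1) + 1 := by omega
  simp only [gaussTerm, this, Finset.prod_range_succ _ (l + k + 1), Finset.prod_range_succ _ k]
  ring

/-- The companion of `gaussTerm`. -/
noncomputable def gaussCompanion (l k : ℕ) : ℝ⟦X⟧ :=
  gaussTerm l k * (((k + 1 : ℕ) : ℝ⟦X⟧) * (linFactor (-4) (l + 1))⁻¹)

lemma gauss_wz (l k : ℕ) : gaussTerm l k - gaussTerm (l + 1) k
    = gaussCompanion l k - gaussCompanion l (k + 1) := by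
  have hP := linFactor_mul_inv (a := 6) (j := l + k + 2) (by omega)
  have hQ := linFactor_mul_inv (a := -4) (j := l + 1) (by omega)
  have hR : ((k : ℝ⟦X⟧) + 2) * C ((k : ℝ) + 2)⁻¹ = 1 := by
    rw [← map_natCast (C : ℝ →+* ℝ⟦X⟧), ← map_ofNat (C : ℝ →+* ℝ⟦X⟧) 2, ← map_add, ← map_mul,
      mul_inv_cancel₀ (by positivity), map_one]
  rw [gaussCompanion, gaussCompanion, gaussTerm_succ_left, gaussTerm_succ_right]
  set P := (linFactor 6 (l + k + 2))⁻¹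
  set Q := (linFactor (-4) (l + 1))⁻¹
  set R : ℝ⟦X⟧ := C ((k : ℝ) + 2)⁻¹
  set F := gaussTerm l k
  simp only [linFactor, map_neg, map_ofNat] at hP hQ ⊢
  push_cast at hP hQ ⊢
  linear_combination (-F * (l + 1 - 4 * X) * Q + F * Q * (k + 1)) * hP - F * hQ
    + F * (k + 1 + 8 * X) * (k + 1 + 2 * X) * P * Q * hR

lemma truncNorm_gaussTerm_succ_left_le (l k : ℕ) : truncNorm (gaussTerm (l + 1) k) ≤
    truncNorm (gaussTerm l k) * (((l : ℝ) + 3 / 2) / ((l : ℝ) + 2)) := by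
  rw [gaussTerm_succ_left]
  refine truncNorm_mul_le_of_le le_rfl ?_
  have h1 := truncNorm_linFactor_le (a := -2) (by norm_num) (show 1 ≤ l + 1 by omega)
  have h2 := truncNorm_linFactor_le (a := 4) (by norm_num) (show 1 ≤ l + 1 by omega)
  have h3 := truncNorm_linFactor_inv_le (a := -4) (by norm_num) (show 1 ≤ l + 1 by omega)
  have h4 := truncNorm_linFactor_inv_le (a := 6) (by norm_num) (show 1 ≤ l + k + 2 by omega)
  have h5 : (((l + k + 2 : ℕ) : ℝ) - 1 / 500)⁻¹ ≤ ((l : ℝ) + 2 - 1 / 500)⁻¹ := by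
    apply inv_anti₀
    · have : (0 : ℝ) ≤ l := by positivity
      linarith
    · push_cast; have : (0 : ℝ) ≤ k := by positivity
      linarith
  refine (truncNorm_mul_le_of_le (truncNorm_mul_le_of_le (truncNorm_mul_le_of_le h1 h2) h3)
    (h4.trans h5)).trans ?_
  have hl : (0 : ℝ) ≤ l := by positivity
  push_cast
  have p1 : (0 : ℝ) < (l : ℝ) + 1 - 1 / 500 := by linarith
  have p2 : (0 : ℝ) < (l : ℝ) + 2 - 1 / 500 := by linarith
  rw [← div_eq_mul_inv, ← div_eq_mul_inv, div_div, div_le_div_iff₀ (by positivity) (by positivity)]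
  nlinarith [mul_nonneg hl hl, mul_nonneg (mul_nonneg hl hl) hl]

lemma truncNorm_gaussTerm_le_zero (l k : ℕ) :
    truncNorm (gaussTerm l k) ≤ truncNorm (gaussTerm 0 k) := by
  induction l with
  | zero => exact le_rfl
  | succ l ih =>
    refine (truncNorm_gaussTerm_succ_left_le l k).trans (le_trans ?_ ih)
    refine mul_le_of_le_one_right (truncNorm_nonneg _) ?_
    rw [div_le_one (by positivity)]; linarith

lemma truncNorm_gaussTerm_zero_sq_le (k : ℕ) :
    truncNorm (gaussTerm 0 k) ^ 2 * ((k : ℝ) + 1) ^ 3 ≤ truncNorm (gaussTerm 0 0) ^ 2 := by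
  refine sq_mul_cube_le_of_ratio (u := fun k => truncNorm (gaussTerm 0 k))
    (r := fun k : ℕ => ((k : ℝ) + 1 + 1 / 500) * ((k : ℝ) + 1 + 1 / 500) /
      (((k : ℝ) + 2) * ((k : ℝ) + 2 - 1 / 500)))
    (fun k => truncNorm_nonneg _) (fun k => ?_) (fun k => ?_) k
  · rw [gaussTerm_succ_right]
    refine truncNorm_mul_le_of_le le_rfl ?_
    have h1 := truncNorm_linFactor_le (a := 8) (by norm_num) (show 1 ≤ k + 1 by omega)
    have h2 := truncNorm_linFactor_le (a := 2) (by norm_num) (show 1 ≤ k + 1 by omega)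
    have h3 : truncNorm (C ((k : ℝ) + 2)⁻¹) ≤ ((k : ℝ) + 2)⁻¹ := by
      rw [truncNorm_C, abs_of_pos (by positivity)]
    have h4 := truncNorm_linFactor_inv_le (a := 6) (by norm_num) (show 1 ≤ 0 + k + 2 by omega)
    refine (truncNorm_mul_le_of_le (truncNorm_mul_le_of_le (truncNorm_mul_le_of_le h1 h2) h3)
      h4).trans (le_of_eq ?_)
    push_cast
    rw [zero_add, ← div_eq_mul_inv, ← div_eq_mul_inv, div_div]
  · have hk : (0 : ℝ) ≤ k := by positivity
    have p2 : (0 : ℝ) < (k : ℝ) + 2 - 1 / 500 := by linarith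
    rw [div_pow, div_mul_eq_mul_div, div_le_iff₀ (by positivity)]
    have key : ((k : ℝ) + 1 + 1 / 500) ^ 4 * ((k : ℝ) + 2)
        ≤ ((k : ℝ) + 1) ^ 3 * ((k : ℝ) + 2 - 1 / 500) ^ 2 := by
      have h2 := mul_nonneg hk hk
      have h3 := mul_nonneg h2 hk
      have h4 := mul_nonneg h3 hk
      have h5 := mul_nonneg h4 hk
      ring_nf at *
      linarith
    have := mul_le_mul_of_nonneg_right key (sq_nonneg ((k : ℝ) + 2))
    linarith

/-- Evaluation of the first boundary sum of the Gauss pair through the second one. -/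
theorem tendsto_sum_gaussCompanion : Tendsto
    (fun N => ∑ l ∈ Finset.range N, coeff 3 (gaussCompanion l 0)) atTop
    (𝓝 (∑' k, coeff 3 (gaussTerm 0 k))) := by
  have hs : Summable fun k => truncNorm (gaussTerm 0 k) :=
    summable_of_sq_mul_cube_le (truncNorm_nonneg _) (fun k => truncNorm_nonneg _)
      truncNorm_gaussTerm_zero_sq_le
  have hc := fun f => abs_coeff_le_truncNorm (le_refl 3) f
  refine tendsto_sum_of_wz (f := fun l k => coeff 3 (gaussTerm l k))
    (g := fun l k => coeff 3 (gaussCompanion l k)) (fun l k => ?_) (hs.mul_left (10 ^ 12))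
    (fun l k => ?_) (fun k => ?_) (fun l => ?_)
  · simp only [← map_sub, gauss_wz]
  · exact (hc _).trans
      (mul_le_mul_of_nonneg_left (truncNorm_gaussTerm_le_zero l k) (by norm_num))
  · have := (tendsto_zero_of_ratio (fun l => truncNorm_nonneg (gaussTerm l k))
      (fun l => truncNorm_gaussTerm_succ_left_le l k)).const_mul (10 ^ 12 : ℝ)
    rw [mul_zero] at this
    exact squeeze_zero_norm (fun l => hc _) this
  · have := (tendsto_mul_of_sq_mul_cube_le (truncNorm_nonneg _)
      (fun k => truncNorm_nonneg _) truncNorm_gaussTerm_zero_sq_le).const_mul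
      (10 ^ 12 * truncNorm (linFactor (-4) (l + 1))⁻¹)
    rw [mul_zero] at this
    refine squeeze_zero_norm (fun k => (hc _).trans ?_) this
    have h1 := truncNorm_mul_le_of_le (truncNorm_gaussTerm_le_zero l k)
      (truncNorm_mul_le_of_le (truncNorm_natCast (k + 1)).le
        (le_refl (truncNorm (linFactor (-4) (l + 1))⁻¹)))
    have h2 := mul_le_mul_of_nonneg_left h1 (show (0 : ℝ) ≤ 10 ^ 12 by norm_num)
    refine h2.trans (le_of_eq ?_)
    push_cast; ring

/-- The kernel of the Wilf–Zeilberger pair `mainTerm`, `mainCompanion`. -/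
noncomputable def mainCore (n k : ℕ) : ℝ⟦X⟧ :=
  (∏ j ∈ Finset.range (n + k), quadFactor 10 56 (j + 1) * (quadFactor 6 40 (j + 1))⁻¹) *
    (quadFactor 6 40 (n + k + 1))⁻¹ *
    (∏ j ∈ Finset.range n, -(quadFactor (-2) 32 (j + 1) * ((2 * j + 1 : ℕ) : ℝ⟦X⟧) *
      (linFactor (-4) (2 * j + 1))⁻¹)) *
    (∏ j ∈ Finset.range k, linFactor 4 (j + 1)) *
    ∏ j ∈ Finset.range (2 * n + k + 1), (linFactor 4 (j + 1))⁻¹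

lemma mainCore_succ_left (n k : ℕ) : mainCore (n + 1) k = mainCore n k *
    -(quadFactor 10 56 (n + k + 1) * (quadFactor 6 40 (n + k + 2))⁻¹ *
      (quadFactor (-2) 32 (n + 1) * ((2 * n + 1 : ℕ) : ℝ⟦X⟧) * (linFactor (-4) (2 * n + 1))⁻¹) *
      ((linFactor 4 (2 * n + k + 2))⁻¹ * (linFactor 4 (2 * n + k + 3))⁻¹)) := by
  have h1 : n + 1 + k = (n + k) + 1 := by omega
  have h2 : 2 * (n + 1) + k + 1 = (2 * n + k + 1) + 1 + 1 := by omega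
  simp only [mainCore, h1, h2, Finset.prod_range_succ _ (n + k), Finset.prod_range_succ _ n,
    Finset.prod_range_succ _ (2 * n + k + 1), Finset.prod_range_succ _ (2 * n + k + 1 + 1)]
  ring

lemma mainCore_succ_right (n k : ℕ) : mainCore n (k + 1) = mainCore n k *
    (quadFactor 10 56 (n + k + 1) * (quadFactor 6 40 (n + k + 2))⁻¹ *
      linFactor 4 (k + 1) * (linFactor 4 (2 * n + k + 2))⁻¹) := by
  have h1 : n + (k + 1) = (n + k) + 1 := by omega
  have h2 : 2 * n + (k + 1) + 1 = (2 * n + k + 1) + 1 := by omega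
  simp only [mainCore, h1, h2, Finset.prod_range_succ _ (n + k), Finset.prod_range_succ _ k,
    Finset.prod_range_succ _ (2 * n + k + 1)]
  ring

/-- The numerator of the rational certificate, scaled by `8`. -/
noncomputable def mainNumerator (t n k : ℝ⟦X⟧) : ℝ⟦X⟧ :=
  4 * (3 + 4 * t + 2 * n + 2 * k) * ((1 + 4 * t + 2 * n + k) * (2 + 4 * t + 2 * n + k)) +
    (2 * n + 4 * t - 1) ^ 2 * (5 + 4 * t + 2 * n + 2 * k) +
    (2 * n + 4 * t - 1) * ((1 - 2 * t) ^ 2 + 124 * t ^ 2 + 4 * (1 - 2 * t) ^ 2 +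
      8 * (1 - 2 * t) * (1 + 4 * t + k)) +
    2 * ((1 - 2 * t) ^ 2 + 124 * t ^ 2) * (2 + 2 * t + k) +
    8 * (1 - 2 * t) ^ 2 * (1 + 4 * t + k)

/-- First component of a Wilf–Zeilberger pair of power series. -/
noncomputable def mainTerm (n k : ℕ) : ℝ⟦X⟧ := mainCore n k * linFactor 4 (n + k + 1)

/-- Second component of a Wilf–Zeilberger pair of power series. -/
noncomputable def mainCompanion (n k : ℕ) : ℝ⟦X⟧ :=
  mainCore n k * (mainNumerator X n k * C (1 / 8)) *
    ((linFactor (-4) (2 * n + 1))⁻¹ * (linFactor 4 (2 * n + k + 2))⁻¹)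

lemma eight_mul_C : (8 : ℝ⟦X⟧) * C (1 / 8) = 1 := by
  rw [← map_ofNat (C : ℝ →+* ℝ⟦X⟧) 8, ← map_mul]; norm_num

lemma main_wz (n k : ℕ) : mainTerm n k - mainTerm (n + 1) k
    = mainCompanion n k - mainCompanion n (k + 1) := by
  have hB := quadFactor_mul_inv (a := 6) (b := 40) (j := n + k + 2) (by omega)
  have hE := linFactor_mul_inv (a := -4) (j := 2 * n + 1) (by omega)
  have hP := linFactor_mul_inv (a := 4) (j := 2 * n + k + 2) (by omega)
  have hQ := linFactor_mul_inv (a := 4) (j := 2 * n + k + 3) (by omega)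
  have hH := eight_mul_C
  have key : 8 * linFactor 4 (n + k + 1) * quadFactor 6 40 (n + k + 2) *
      linFactor (-4) (2 * n + 1) * linFactor 4 (2 * n + k + 2) * linFactor 4 (2 * n + k + 3)
      + 8 * quadFactor 10 56 (n + k + 1) * quadFactor (-2) 32 (n + 1) *
        ((2 * n + 1 : ℕ) : ℝ⟦X⟧) * linFactor 4 (n + k + 2)
      - mainNumerator X n k * quadFactor 6 40 (n + k + 2) * linFactor 4 (2 * n + k + 3)
      + quadFactor 10 56 (n + k + 1) * linFactor 4 (k + 1) * mainNumerator X n (k + 1 : ℕ) = 0 := by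
    simp only [linFactor, quadFactor, mainNumerator, map_neg, map_ofNat]
    push_cast
    ring
  have i1 : n + 1 + k + 1 = n + k + 2 := by omega
  have i2 : 2 * n + (k + 1) + 2 = 2 * n + k + 3 := by omega
  simp only [mainTerm, mainCompanion, mainCore_succ_left, mainCore_succ_right, i1, i2]
  generalize mainCore n k = F at *
  generalize (C (1 / 8) : ℝ⟦X⟧) = h at *
  generalize (quadFactor 6 40 (n + k + 2))⁻¹ = b at *
  generalize (linFactor (-4) (2 * n + 1))⁻¹ = e at *
  generalize (linFactor 4 (2 * n + k + 2))⁻¹ = p at *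
  generalize (linFactor 4 (2 * n + k + 3))⁻¹ = q at *
  generalize quadFactor 6 40 (n + k + 2) = B at *
  generalize linFactor (-4) (2 * n + 1) = E at *
  generalize linFactor 4 (2 * n + k + 2) = P at *
  generalize linFactor 4 (2 * n + k + 3) = Q at *
  generalize linFactor 4 (n + k + 1) = L at *
  generalize linFactor 4 (n + k + 2) = L' at *
  generalize linFactor 4 (k + 1) = L'' at *
  generalize quadFactor 10 56 (n + k + 1) = A at *
  generalize quadFactor (-2) 32 (n + 1) = D at *
  generalize mainNumerator X n k = N at *
  generalize mainNumerator X n (k + 1 : ℕ) = N' at *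
  generalize ((2 * n + 1 : ℕ) : ℝ⟦X⟧) = x at *
  linear_combination F * b * e * p * q * h * key
    - F * L * (hH * B * b * E * e * P * p * Q * q + hB * E * e * P * p * Q * q
      + hE * P * p * Q * q + hP * Q * q + hQ)
    - F * A * D * x * L' * b * e * p * q * hH + F * N * h * e * p * (hB * Q * q + hQ)

lemma truncNorm_mainCore_succ_left_le (n k : ℕ) :
    truncNorm (mainCore (n + 1) k) ≤ truncNorm (mainCore n k) * (1 / 3) := by
  rw [mainCore_succ_left]
  refine truncNorm_mul_le_of_le le_rfl ?_
  rw [truncNorm_neg]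
  have hn : (0 : ℝ) ≤ n := by positivity
  have hk : (0 : ℝ) ≤ k := by positivity
  have h1 : truncNorm (quadFactor 10 56 (n + k + 1) * (quadFactor 6 40 (n + k + 2))⁻¹) ≤ 1 := by
    refine (truncNorm_mul_le_of_le
      (truncNorm_quadFactor_le (by norm_num) (by norm_num) (by omega))
      (truncNorm_quadFactor_inv_le (by norm_num) (by norm_num) (by omega))).trans ?_
    push_cast
    have : (0 : ℝ) < (n : ℝ) + k + 2 - 1 / 500 := by linarith
    rw [← div_eq_mul_inv, div_le_one (by positivity)]
    nlinarith
  have h2 : truncNorm (((2 * n + 1 : ℕ) : ℝ⟦X⟧) * (linFactor (-4) (2 * n + 1))⁻¹)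
      ≤ 500 / 499 := by
    refine (truncNorm_mul_le_of_le (truncNorm_natCast _).le
      (truncNorm_linFactor_inv_le (by norm_num) (by omega))).trans ?_
    push_cast
    have : (0 : ℝ) < 2 * (n : ℝ) + 1 - 1 / 500 := by linarith
    rw [← div_eq_mul_inv, div_le_div_iff₀ (by positivity) (by positivity)]
    linarith
  have h3 := truncNorm_quadFactor_le (a := -2) (b := 32) (by norm_num) (by norm_num)
    (show 1 ≤ n + 1 by omega)
  have h4 : ∀ i : ℕ, truncNorm (linFactor 4 (2 * n + k + 2 + i))⁻¹
      ≤ (2 * (n : ℝ) + 2 - 1 / 500)⁻¹ := by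
    intro i
    have hi : (0 : ℝ) ≤ i := by positivity
    refine (truncNorm_linFactor_inv_le (by norm_num) (by omega)).trans ?_
    apply inv_anti₀
    · linarith
    · push_cast; linarith
  have h5 := truncNorm_mul_le_of_le h1 (truncNorm_mul_le_of_le
    (truncNorm_mul_le_of_le h3 h2) (truncNorm_mul_le_of_le (h4 0) (h4 1)))
  have h6 : ((n + 1 : ℕ) : ℝ) * ((n + 1 : ℕ) + 1 / 500) * (500 / 499) *
      ((2 * (n : ℝ) + 2 - 1 / 500)⁻¹ * (2 * (n : ℝ) + 2 - 1 / 500)⁻¹) ≤ 1 / 3 := by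
    push_cast
    have : (0 : ℝ) < 2 * (n : ℝ) + 2 - 1 / 500 := by linarith
    rw [← mul_inv, ← div_eq_mul_inv, div_le_iff₀ (by positivity)]
    nlinarith
  rw [one_mul] at h5
  refine le_trans (le_of_eq ?_) (h5.trans h6)
  congr 1
  ring

lemma truncNorm_mainCore_le (n k : ℕ) :
    truncNorm (mainCore n k) ≤ truncNorm (mainCore 0 k) * (1 / 3) ^ n := by
  induction n with
  | zero => simp
  | succ n ih =>
    refine (truncNorm_mainCore_succ_left_le n k).trans ?_
    rw [pow_succ, ← mul_assoc]
    exact mul_le_mul_of_nonneg_right ih (by norm_num)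

lemma truncNorm_mainCore_zero_sq_le (k : ℕ) :
    (((k : ℝ) + 1) * truncNorm (mainCore 0 k)) ^ 2 * ((k : ℝ) + 1) ^ 3
      ≤ truncNorm (mainCore 0 0) ^ 2 := by
  have := sq_mul_cube_le_of_ratio (u := fun k : ℕ => ((k : ℝ) + 1) * truncNorm (mainCore 0 k))
    (r := fun k : ℕ => ((k : ℝ) + 1 + 1 / 500) ^ 2 / ((k : ℝ) + 2 - 1 / 500) ^ 2)
    (fun k => mul_nonneg (by positivity) (truncNorm_nonneg _)) (fun k => ?_) (fun k => ?_) k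
  · simpa using this
  · have hk : (0 : ℝ) ≤ k := by positivity
    have p2 : (0 : ℝ) < (k : ℝ) + 2 - 1 / 500 := by linarith
    rw [mainCore_succ_right]
    have h1 := truncNorm_quadFactor_le (a := 10) (b := 56) (by norm_num) (by norm_num)
      (show 1 ≤ 0 + k + 1 by omega)
    have h2 := truncNorm_quadFactor_inv_le (a := 6) (b := 40) (by norm_num) (by norm_num)
      (show 1 ≤ 0 + k + 2 by omega)
    have h3 := truncNorm_linFactor_le (a := 4) (by norm_num) (show 1 ≤ k + 1 by omega)
    have h4 := truncNorm_linFactor_inv_le (a := 4) (by norm_num)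
      (show 1 ≤ 2 * 0 + k + 2 by omega)
    have h5 := truncNorm_mul_le_of_le (le_refl (truncNorm (mainCore 0 k)))
      (truncNorm_mul_le_of_le (truncNorm_mul_le_of_le (truncNorm_mul_le_of_le h1 h2) h3) h4)
    refine (mul_le_mul_of_nonneg_left h5 (by positivity)).trans (le_of_eq ?_)
    push_cast
    simp only [zero_add]
    field_simp
    ring
  · have hk : (0 : ℝ) ≤ k := by positivity
    have p2 : (0 : ℝ) < (k : ℝ) + 2 - 1 / 500 := by linarith
    rw [div_pow, div_mul_eq_mul_div, div_le_iff₀ (by positivity)]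
    have h2 := mul_nonneg hk hk
    have h3 := mul_nonneg h2 hk
    have h4 := mul_nonneg h3 hk
    have h5 := mul_nonneg h4 hk
    have h6 := mul_nonneg h5 hk
    have h7 := mul_nonneg h6 hk
    ring_nf at *
    linarith

lemma exists_truncNorm_mainNumerator_le (n : ℕ) :
    ∃ M : ℝ, 0 ≤ M ∧ ∀ k : ℕ, truncNorm (mainNumerator X n k) ≤ M * ((k : ℝ) + 1) ^ 3 := by
  have hpoly : ∀ t ν : ℝ⟦X⟧, ∃ c₀ c₁ c₂ : ℝ⟦X⟧, ∀ κ : ℝ⟦X⟧,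
      mainNumerator t ν κ = 8 * κ ^ 3 + c₂ * κ ^ 2 + c₁ * κ + c₀ := by
    intro t ν
    refine ⟨4 * (3 + 4 * t + 2 * ν) * ((1 + 4 * t + 2 * ν) * (2 + 4 * t + 2 * ν)) +
      (2 * ν + 4 * t - 1) ^ 2 * (5 + 4 * t + 2 * ν) +
      (2 * ν + 4 * t - 1) * ((1 - 2 * t) ^ 2 + 124 * t ^ 2 + 4 * (1 - 2 * t) ^ 2 +
        8 * (1 - 2 * t) * (1 + 4 * t)) +
      2 * ((1 - 2 * t) ^ 2 + 124 * t ^ 2) * (2 + 2 * t) + 8 * (1 - 2 * t) ^ 2 * (1 + 4 * t),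
      4 * (3 + 4 * t + 2 * ν) * (3 + 8 * t + 4 * ν) +
      8 * (1 + 4 * t + 2 * ν) * (2 + 4 * t + 2 * ν) + 2 * (2 * ν + 4 * t - 1) ^ 2 +
      8 * (2 * ν + 4 * t - 1) * (1 - 2 * t) + 2 * ((1 - 2 * t) ^ 2 + 124 * t ^ 2) +
      8 * (1 - 2 * t) ^ 2,
      4 * (3 + 4 * t + 2 * ν) + 8 * (3 + 8 * t + 4 * ν), fun κ => ?_⟩
    simp only [mainNumerator]
    ring
  obtain ⟨c₀, c₁, c₂, h⟩ := hpoly X n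
  replace h : ∀ k : ℕ, mainNumerator X n k = ((8 : ℕ) : ℝ⟦X⟧) * ((k ^ 3 : ℕ) : ℝ⟦X⟧) +
      c₂ * ((k ^ 2 : ℕ) : ℝ⟦X⟧) + c₁ * (k : ℝ⟦X⟧) + c₀ := fun k => by
    rw [h]; push_cast; rfl
  have p₀ := truncNorm_nonneg c₀
  have p₁ := truncNorm_nonneg c₁
  have p₂ := truncNorm_nonneg c₂
  refine ⟨8 + truncNorm c₂ + truncNorm c₁ + truncNorm c₀, by positivity, fun k => ?_⟩
  have hk : (0 : ℝ) ≤ k := by positivity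
  rw [h]
  have t₃ := truncNorm_mul_le ((8 : ℕ) : ℝ⟦X⟧) ((k ^ 3 : ℕ) : ℝ⟦X⟧)
  have t₂ := truncNorm_mul_le c₂ ((k ^ 2 : ℕ) : ℝ⟦X⟧)
  have t₁ := truncNorm_mul_le c₁ (k : ℝ⟦X⟧)
  simp only [truncNorm_natCast] at t₁ t₂ t₃
  push_cast at t₁ t₂ t₃ ⊢
  have q₃ : (k : ℝ) ^ 3 ≤ ((k : ℝ) + 1) ^ 3 := by gcongr; linarith
  have q₂ : (k : ℝ) ^ 2 ≤ ((k : ℝ) + 1) ^ 3 := by nlinarith [pow_nonneg hk 3, pow_nonneg hk 2]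
  have q₁ : (k : ℝ) ≤ ((k : ℝ) + 1) ^ 3 := by nlinarith [pow_nonneg hk 3, pow_nonneg hk 2]
  have q₀ : 1 ≤ ((k : ℝ) + 1) ^ 3 := by nlinarith [pow_nonneg hk 3, pow_nonneg hk 2]
  have s₂ := mul_le_mul_of_nonneg_left q₂ p₂
  have s₁ := mul_le_mul_of_nonneg_left q₁ p₁
  have s₀ := mul_le_mul_of_nonneg_left q₀ p₀
  refine (truncNorm_add_le _ _).trans ?_
  refine (add_le_add_left (truncNorm_add_le _ _) _).trans ?_
  refine (add_le_add_left (add_le_add_left (truncNorm_add_le _ _) _) _).trans ?_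
  linarith

lemma truncNorm_mainTerm_le (n k : ℕ) : truncNorm (mainTerm n k)
    ≤ 2 * (((k : ℝ) + 1) * truncNorm (mainCore 0 k)) * (1 / 2) ^ n := by
  have hn : (0 : ℝ) ≤ n := by positivity
  have hk : (0 : ℝ) ≤ k := by positivity
  have h1 := truncNorm_mul_le_of_le (truncNorm_mainCore_le n k)
    (truncNorm_linFactor_le (a := 4) (by norm_num) (show 1 ≤ n + k + 1 by omega))
  have h2 : (n : ℝ) + 2 ≤ 2 * (3 / 2) ^ n := by
    clear h1 hn
    induction n with
    | zero => norm_num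
    | succ n ih =>
      have hn : (0 : ℝ) ≤ n := by positivity
      rw [pow_succ]; push_cast; linarith
  have h3 : ((n + k + 1 : ℕ) : ℝ) + 1 / 500 ≤ ((k : ℝ) + 1) * (n + 2) := by
    push_cast; nlinarith
  refine h1.trans ?_
  have e : ((1 : ℝ) / 2) ^ n = (1 / 3) ^ n * (3 / 2) ^ n := by rw [← mul_pow]; norm_num
  have p := mul_nonneg (truncNorm_nonneg (mainCore 0 k)) (show (0 : ℝ) ≤ (1 / 3) ^ n by positivity)
  calc truncNorm (mainCore 0 k) * (1 / 3) ^ n * (((n + k + 1 : ℕ) : ℝ) + 1 / 500)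
      ≤ truncNorm (mainCore 0 k) * (1 / 3) ^ n * (((k : ℝ) + 1) * (2 * (3 / 2) ^ n)) :=
        mul_le_mul_of_nonneg_left
          (h3.trans (mul_le_mul_of_nonneg_left h2 (by positivity))) p
    _ = _ := by rw [e]; ring

/-- The two boundary sums of the pair `mainTerm`, `mainCompanion` agree. -/
theorem tendsto_sum_mainCompanion : Tendsto
    (fun N => ∑ n ∈ Finset.range N, coeff 3 (mainCompanion n 0)) atTop
    (𝓝 (∑' k, coeff 3 (mainTerm 0 k))) := by
  have hv : ∀ k : ℕ, 0 ≤ ((k : ℝ) + 1) * truncNorm (mainCore 0 k) :=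
    fun k => mul_nonneg (by positivity) (truncNorm_nonneg _)
  have hs := summable_of_sq_mul_cube_le (truncNorm_nonneg _) hv truncNorm_mainCore_zero_sq_le
  have hc := fun f => abs_coeff_le_truncNorm (le_refl 3) f
  have hF := fun n k => (hc (mainTerm n k)).trans
    (mul_le_mul_of_nonneg_left (truncNorm_mainTerm_le n k) (by norm_num))
  refine tendsto_sum_of_wz (f := fun n k => coeff 3 (mainTerm n k))
    (g := fun n k => coeff 3 (mainCompanion n k)) (fun n k => ?_)
    (hs.mul_left (10 ^ 12 * 2)) (fun n k => ?_) (fun k => ?_) (fun n => ?_)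
  · simp only [← map_sub, main_wz]
  · refine (hF n k).trans ?_
    have : ((1 : ℝ) / 2) ^ n ≤ 1 := pow_le_one₀ (by norm_num) (by norm_num)
    have := mul_le_mul_of_nonneg_left this (hv k)
    linarith
  · have := (tendsto_pow_atTop_nhds_zero_of_lt_one (r := (1 / 2 : ℝ)) (by norm_num)
      (by norm_num)).const_mul (10 ^ 12 * (2 * (((k : ℝ) + 1) * truncNorm (mainCore 0 k))))
    rw [mul_zero] at this
    refine squeeze_zero_norm (fun n => (hF n k).trans (le_of_eq ?_)) this
    ring
  · obtain ⟨M, hM, hN⟩ := exists_truncNorm_mainNumerator_le n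
    have := (tendsto_mul_of_sq_mul_cube_le (truncNorm_nonneg _) hv
      truncNorm_mainCore_zero_sq_le).const_mul
      (10 ^ 12 * M * truncNorm (linFactor (-4) (2 * n + 1))⁻¹)
    rw [mul_zero] at this
    refine squeeze_zero_norm (fun k => (hc _).trans ?_) this
    have hk : (0 : ℝ) ≤ k := by positivity
    have hn : (0 : ℝ) ≤ n := by positivity
    have h1 : truncNorm (mainCore n k) ≤ truncNorm (mainCore 0 k) :=
      (truncNorm_mainCore_le n k).trans (mul_le_of_le_one_right (truncNorm_nonneg _)
        (pow_le_one₀ (by norm_num) (by norm_num)))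
    have h2 : truncNorm (C (1 / 8)) ≤ 1 := by rw [truncNorm_C]; norm_num
    have h3 : truncNorm (linFactor 4 (2 * n + k + 2))⁻¹ ≤ ((k : ℝ) + 1)⁻¹ := by
      refine (truncNorm_linFactor_inv_le (by norm_num) (by omega)).trans ?_
      apply inv_anti₀ (by positivity)
      push_cast; linarith
    have h4 := truncNorm_mul_le_of_le (truncNorm_mul_le_of_le h1
      (truncNorm_mul_le_of_le (hN k) h2)) (truncNorm_mul_le_of_le
        (le_refl (truncNorm (linFactor (-4) (2 * n + 1))⁻¹)) h3)
    have h5 := mul_le_mul_of_nonneg_left h4 (show (0 : ℝ) ≤ 10 ^ 12 by norm_num)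
    refine h5.trans (le_of_eq ?_)
    field_simp

lemma genHarmonic_succ (s n : ℕ) :
    genHarmonic s (n + 1) = genHarmonic s n + 1 / ((n : ℝ) + 1) ^ s :=
  Finset.sum_range_succ _ _

lemma genHarmonic_zero (s : ℕ) : genHarmonic s 0 = 0 := Finset.sum_range_zero _

lemma C_natCast_mul_eq {a b : ℝ} {m e : ℕ} (h : a * (m : ℝ) ^ e = b) :
    (C a : ℝ⟦X⟧) * (m : ℝ⟦X⟧) ^ e = C b := by
  rw [← h]; simp

lemma coeff_three_cubic (a b c d : ℝ) :
    coeff 3 (C a + C b * X + C c * X ^ 2 + C d * X ^ 3 : ℝ⟦X⟧) = d := by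
  simp [coeff_X_pow]

/-! ### The second boundary of the Gauss pair -/

lemma gaussTerm_zero_right_modEq (l : ℕ) :
    (X : ℝ⟦X⟧) ^ 4 ∣ gaussTerm l 0 * linFactor 6 (l + 1) -
      (1 + C (16 * genHarmonic 2 l) * X ^ 2 - C (32 * genHarmonic 3 l) * X ^ 3) := by
  induction l with
  | zero =>
    have h := linFactor_mul_inv (a := 6) (j := 1) le_rfl
    rw [mul_comm] at h
    simp [gaussTerm, genHarmonic_zero, h]
  | succ l ih =>
    have hP := linFactor_mul_inv (a := 6) (j := l + 2) (by omega)
    have hQ := linFactor_mul_inv (a := -4) (j := l + 1) (by omega)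
    have hl : ((l + 1 : ℕ) : ℝ) ≠ 0 := by positivity
    have h1 := C_natCast_mul_eq (m := l + 1) (e := 2) (a := 16 / ((l + 1 : ℕ) : ℝ) ^ 2) (b := 16)
      (by field_simp)
    have h2 := C_natCast_mul_eq (m := l + 1) (e := 3) (a := 32 / ((l + 1 : ℕ) : ℝ) ^ 3) (b := 32)
      (by field_simp)
    have h3 : (C (32 / ((l + 1 : ℕ) : ℝ) ^ 3) : ℝ⟦X⟧) * ((l + 1 : ℕ) : ℝ⟦X⟧) ^ 2
        = 2 * C (16 / ((l + 1 : ℕ) : ℝ) ^ 2) * ((l + 1 : ℕ) : ℝ⟦X⟧) := by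
      have : 32 / ((l + 1 : ℕ) : ℝ) ^ 3 * ((l + 1 : ℕ) : ℝ) ^ 2
          = 2 * (16 / ((l + 1 : ℕ) : ℝ) ^ 2) * ((l + 1 : ℕ) : ℝ) := by field_simp; norm_num
      simpa only [map_mul, map_add, map_pow, map_ofNat, map_natCast]
        using congrArg (C : ℝ →+* ℝ⟦X⟧) this
    have e2 : 16 * genHarmonic 2 (l + 1)
        = 16 * genHarmonic 2 l + 16 / ((l + 1 : ℕ) : ℝ) ^ 2 := by
      rw [genHarmonic_succ]; push_cast; ring
    have e3 : 32 * genHarmonic 3 (l + 1)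
        = 32 * genHarmonic 3 l + 32 / ((l + 1 : ℕ) : ℝ) ^ 3 := by
      rw [genHarmonic_succ]; push_cast; ring
    obtain ⟨c, hc⟩ := ih
    refine dvd_sub_of_mul_dvd_sub (d := linFactor 6 (l + 1) * linFactor (-4) (l + 1)) ?_ ?_
    · rw [map_mul]
      exact mul_ne_zero (linFactor_ne_zero (by omega)) (linFactor_ne_zero (by omega))
    rw [gaussTerm_succ_left, e2, e3, map_add, map_add]
    generalize (C (16 * genHarmonic 2 l) : ℝ⟦X⟧) = a at *
    generalize (C (32 * genHarmonic 3 l) : ℝ⟦X⟧) = b at *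
    generalize (C (16 / ((l + 1 : ℕ) : ℝ) ^ 2) : ℝ⟦X⟧) = α at *
    generalize (C (32 / ((l + 1 : ℕ) : ℝ) ^ 3) : ℝ⟦X⟧) = β at *
    have i1 : l + 1 + 1 = l + 2 := by omega
    have i2 : l + 0 + 2 = l + 2 := by omega
    rw [i1, i2]
    generalize (linFactor 6 (l + 2))⁻¹ = P at *
    generalize (linFactor (-4) (l + 1))⁻¹ = Q at *
    generalize linFactor 6 (l + 2) = P' at *
    generalize gaussTerm l 0 = G at *
    have key : linFactor (-2) (l + 1) * linFactor 4 (l + 1) * (1 + a * X ^ 2 - b * X ^ 3)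
        - (1 + (a + α) * X ^ 2 - (b + β) * X ^ 3) * linFactor 6 (l + 1) * linFactor (-4) (l + 1)
        = X ^ 4 * (16 * a - 16 * b * X + 24 * α + 2 * β * ((l + 1 : ℕ) : ℝ⟦X⟧) - 24 * β * X) := by
      simp only [linFactor, map_neg, map_ofNat] at *
      linear_combination -X ^ 2 * h1 + X ^ 3 * h3
    refine ⟨c * linFactor (-2) (l + 1) * linFactor 4 (l + 1) +
      (16 * a - 16 * b * X + 24 * α + 2 * β * ((l + 1 : ℕ) : ℝ⟦X⟧) - 24 * β * X), ?_⟩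
    linear_combination key + linFactor (-2) (l + 1) * linFactor 4 (l + 1) * hc
      + G * linFactor (-2) (l + 1) * linFactor 4 (l + 1) * linFactor 6 (l + 1) *
        (hP * linFactor (-4) (l + 1) * Q + hQ)

lemma coeff_gaussCompanion_zero (l : ℕ) : coeff 3 (gaussCompanion l 0) =
    -(104 / ((l : ℝ) + 1) ^ 5) - 32 * (genHarmonic 2 l / ((l : ℝ) + 1) ^ 3)
      - 32 * (genHarmonic 3 l / ((l : ℝ) + 1) ^ 2) := by
  obtain ⟨c, hc⟩ := gaussTerm_zero_right_modEq l
  have hQ := linFactor_mul_inv (a := -4) (j := l + 1) (by omega)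
  have hL : ((l + 1 : ℕ) : ℝ) ≠ 0 := by positivity
  have h0 := C_natCast_mul_eq (m := l + 1) (e := 2) (a := 1 / ((l + 1 : ℕ) : ℝ) ^ 2) (b := 1)
    (by field_simp)
  have h1 : (C (2 / ((l + 1 : ℕ) : ℝ) ^ 3) : ℝ⟦X⟧) * ((l + 1 : ℕ) : ℝ⟦X⟧)
      = 2 * C (1 / ((l + 1 : ℕ) : ℝ) ^ 2) := by
    have : 2 / ((l + 1 : ℕ) : ℝ) ^ 3 * ((l + 1 : ℕ) : ℝ)
      = 2 * (1 / ((l + 1 : ℕ) : ℝ) ^ 2) := by field_simp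
    simpa only [map_mul, map_add, map_pow, map_ofNat, map_natCast]
      using congrArg (C : ℝ →+* ℝ⟦X⟧) this
  have h2 : (C (28 / ((l + 1 : ℕ) : ℝ) ^ 4) : ℝ⟦X⟧) * ((l + 1 : ℕ) : ℝ⟦X⟧) ^ 2
      = 28 * C (1 / ((l + 1 : ℕ) : ℝ) ^ 2) := by
    have : 28 / ((l + 1 : ℕ) : ℝ) ^ 4 * ((l + 1 : ℕ) : ℝ) ^ 2
      = 28 * (1 / ((l + 1 : ℕ) : ℝ) ^ 2) := by field_simp
    simpa only [map_mul, map_add, map_pow, map_ofNat, map_natCast]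
      using congrArg (C : ℝ →+* ℝ⟦X⟧) this
  have h3 : (C (104 / ((l + 1 : ℕ) : ℝ) ^ 5) : ℝ⟦X⟧) * ((l + 1 : ℕ) : ℝ⟦X⟧) ^ 2
      = 2 * C (28 / ((l + 1 : ℕ) : ℝ) ^ 4) * ((l + 1 : ℕ) : ℝ⟦X⟧)
        + 24 * C (2 / ((l + 1 : ℕ) : ℝ) ^ 3) := by
    have : 104 / ((l + 1 : ℕ) : ℝ) ^ 5 * ((l + 1 : ℕ) : ℝ) ^ 2
      = 2 * (28 / ((l + 1 : ℕ) : ℝ) ^ 4) * ((l + 1 : ℕ) : ℝ)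
        + 24 * (2 / ((l + 1 : ℕ) : ℝ) ^ 3) := by field_simp; norm_num
    simpa only [map_mul, map_add, map_pow, map_ofNat, map_natCast]
      using congrArg (C : ℝ →+* ℝ⟦X⟧) this
  have hdvd : X ^ 4 ∣ gaussCompanion l 0 - (C (1 / ((l + 1 : ℕ) : ℝ) ^ 2)
      + C (-(2 / ((l + 1 : ℕ) : ℝ) ^ 3)) * X
      + C (28 / ((l + 1 : ℕ) : ℝ) ^ 4
        + 16 * genHarmonic 2 l * (1 / ((l + 1 : ℕ) : ℝ) ^ 2)) * X ^ 2
      + C (-(104 / ((l + 1 : ℕ) : ℝ) ^ 5) - 16 * genHarmonic 2 l * (2 / ((l + 1 : ℕ) : ℝ) ^ 3)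
        - 32 * genHarmonic 3 l * (1 / ((l + 1 : ℕ) : ℝ) ^ 2)) * X ^ 3) := by
    refine dvd_sub_of_mul_dvd_sub (d := linFactor 6 (l + 1) * linFactor (-4) (l + 1)) ?_ ?_
    · rw [map_mul]
      exact mul_ne_zero (linFactor_ne_zero (by omega)) (linFactor_ne_zero (by omega))
    rw [gaussCompanion]
    simp only [map_add, map_sub, map_neg, map_mul _ (16 * genHarmonic 2 l),
      map_mul _ (32 * genHarmonic 3 l)]
    generalize (C (16 * genHarmonic 2 l) : ℝ⟦X⟧) = a at *
    generalize (C (32 * genHarmonic 3 l) : ℝ⟦X⟧) = b at *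
    generalize (C (1 / ((l + 1 : ℕ) : ℝ) ^ 2) : ℝ⟦X⟧) = r₀ at *
    generalize (C (2 / ((l + 1 : ℕ) : ℝ) ^ 3) : ℝ⟦X⟧) = r₁ at *
    generalize (C (28 / ((l + 1 : ℕ) : ℝ) ^ 4) : ℝ⟦X⟧) = r₂ at *
    generalize (C (104 / ((l + 1 : ℕ) : ℝ) ^ 5) : ℝ⟦X⟧) = r₃ at *
    generalize (linFactor (-4) (l + 1))⁻¹ = Q at *
    generalize gaussTerm l 0 = G at *
    rw [zero_add, Nat.cast_one, one_mul]
    have hd : linFactor 6 (l + 1) * linFactor (-4) (l + 1) = ((l + 1 : ℕ) : ℝ⟦X⟧) ^ 2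
        + 2 * ((l + 1 : ℕ) : ℝ⟦X⟧) * X - 24 * X ^ 2 := by
      simp only [linFactor, map_neg, map_ofNat]; ring
    generalize linFactor (-4) (l + 1) = q at *
    generalize linFactor 6 (l + 1) = p at *
    generalize ((l + 1 : ℕ) : ℝ⟦X⟧) = L at *
    rw [map_one] at h0
    refine ⟨c - (2 * L * (-r₃ - a * r₁ - b * r₀) - 24 * (r₂ + a * r₀)
      - 24 * X * (-r₃ - a * r₁ - b * r₀)), ?_⟩
    linear_combination hc + G * p * hQ
      - (r₀ + -r₁ * X + (r₂ + a * r₀) * X ^ 2 + (-r₃ - a * r₁ - b * r₀) * X ^ 3) * hd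
      - (1 + a * X ^ 2 - b * X ^ 3) * h0 + (X * L + a * X ^ 3 * L) * h1
      - X ^ 2 * (h2 - 2 * h1) + X ^ 3 * h3
  rw [coeff_eq_of_X_pow_dvd_sub hdvd (by norm_num), coeff_three_cubic]
  push_cast
  ring

/-! ### The first boundary of the main pair -/

lemma mainCore_boundary_succ (n : ℕ) :
    mainCore (n + 1) 0 * quadFactor 6 40 (n + 2) * linFactor 4 (2 * n + 3) *
      (quadFactor 6 40 (n + 1) * linFactor 4 (2 * n + 1) * linFactor (-4) (2 * n + 1) *
        linFactor 4 (2 * n + 2)) =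
    -(mainCore n 0 * quadFactor 6 40 (n + 1) * linFactor 4 (2 * n + 1) *
      (quadFactor 10 56 (n + 1) * quadFactor (-2) 32 (n + 1) * ((2 * n + 1 : ℕ) : ℝ⟦X⟧))) := by
  have hB := quadFactor_mul_inv (a := 6) (b := 40) (j := n + 2) (by omega)
  have hE := linFactor_mul_inv (a := -4) (j := 2 * n + 1) (by omega)
  have hP := linFactor_mul_inv (a := 4) (j := 2 * n + 2) (by omega)
  have hQ := linFactor_mul_inv (a := 4) (j := 2 * n + 3) (by omega)
  rw [mainCore_succ_left]
  simp only [add_zero]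
  generalize (quadFactor 6 40 (n + 2))⁻¹ = b at *
  generalize (linFactor (-4) (2 * n + 1))⁻¹ = e at *
  generalize (linFactor 4 (2 * n + 2))⁻¹ = p at *
  generalize (linFactor 4 (2 * n + 3))⁻¹ = q at *
  generalize quadFactor 6 40 (n + 2) = b' at *
  generalize linFactor (-4) (2 * n + 1) = e' at *
  generalize linFactor 4 (2 * n + 2) = p' at *
  generalize linFactor 4 (2 * n + 3) = q' at *
  have h : b' * b * (e' * e) * (p' * p) * (q' * q) = 1 := by rw [hB, hE, hP, hQ]; ring
  linear_combination -(mainCore n 0 * quadFactor 6 40 (n + 1) * linFactor 4 (2 * n + 1) *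
      (quadFactor 10 56 (n + 1) * quadFactor (-2) 32 (n + 1) * ((2 * n + 1 : ℕ) : ℝ⟦X⟧))) * h

/-- The alternating reciprocal central binomial coefficients. -/
noncomputable def altInvCentralBinom (n : ℕ) : ℝ := (-1) ^ n / n.centralBinom

lemma altInvCentralBinom_eq (n : ℕ) : ∃ s : ℝ,
    altInvCentralBinom n = 2 * (2 * n + 1 : ℕ) * s ∧
      altInvCentralBinom (n + 1) = -((n + 1 : ℕ) * s) := by
  have h := congrArg (Nat.cast (R := ℝ)) (Nat.succ_mul_centralBinom_succ n)
  have h0 : (n.centralBinom : ℝ) ≠ 0 := by exact_mod_cast n.centralBinom_ne_zero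
  have h1 : ((n + 1).centralBinom : ℝ) ≠ 0 := by exact_mod_cast (n + 1).centralBinom_ne_zero
  refine ⟨altInvCentralBinom n / (2 * (2 * n + 1 : ℕ)), by field_simp, ?_⟩
  push_cast at h
  simp only [altInvCentralBinom, pow_succ]
  push_cast
  field_simp
  linear_combination h

/-- The harmonic combination occurring as second order coefficient of the main pair. -/
noncomputable def mainHarmonic (n : ℕ) : ℝ :=
  16 * (genHarmonic 2 (2 * n) + 3 / 4 * genHarmonic 2 n)

lemma mainHarmonic_succ (n : ℕ) : mainHarmonic (n + 1) = mainHarmonic n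
    + 16 / ((n + 1 : ℕ) : ℝ) ^ 2 + 16 / ((2 * n + 1 : ℕ) : ℝ) ^ 2 := by
  have : 2 * (n + 1) = 2 * n + 1 + 1 := by ring
  simp only [mainHarmonic, this, genHarmonic_succ]
  push_cast
  field_simp
  ring

lemma mainCore_boundary_modEq (n : ℕ) :
    (X : ℝ⟦X⟧) ^ 4 ∣ mainCore n 0 * quadFactor 6 40 (n + 1) * linFactor 4 (2 * n + 1) -
      C (altInvCentralBinom n) * (1 + C (mainHarmonic n) * X ^ 2) := by
  induction n with
  | zero =>
    have h := linFactor_mul_inv (a := 4) (j := 1) le_rfl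
    have h' := quadFactor_mul_inv (a := 6) (b := 40) (j := 1) le_rfl
    have : mainCore 0 0 * quadFactor 6 40 (0 + 1) * linFactor 4 (2 * 0 + 1) = 1 := by
      simp only [mainCore, Finset.prod_range_zero, Finset.prod_range_one, mul_zero, zero_add]
      linear_combination h + linFactor 4 1 * (linFactor 4 1)⁻¹ * h'
    rw [this]
    simp [altInvCentralBinom, mainHarmonic, genHarmonic_zero]
  | succ n ih =>
    have hs := mainCore_boundary_succ n
    obtain ⟨s, hq, hq'⟩ := altInvCentralBinom_eq n
    have h1 := C_natCast_mul_eq (m := n + 1) (e := 2) (a := 16 / ((n + 1 : ℕ) : ℝ) ^ 2) (b := 16)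
      (by field_simp)
    have h2 := C_natCast_mul_eq (m := 2 * n + 1) (e := 2) (a := 16 / ((2 * n + 1 : ℕ) : ℝ) ^ 2)
      (b := 16) (by field_simp)
    have h3 : linFactor 4 (2 * n + 2) = 2 * (((n + 1 : ℕ) : ℝ⟦X⟧) + 2 * X) := by
      simp only [linFactor, map_ofNat]; push_cast; ring
    obtain ⟨c, hc⟩ := ih
    refine dvd_sub_of_mul_dvd_sub (d := quadFactor 6 40 (n + 1) * linFactor 4 (2 * n + 1) *
      linFactor (-4) (2 * n + 1) * linFactor 4 (2 * n + 2) * ((n + 1 : ℕ) : ℝ⟦X⟧) ^ 2) ?_ ?_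
    · simp only [map_mul, map_pow]
      refine mul_ne_zero (mul_ne_zero (mul_ne_zero (mul_ne_zero (quadFactor_ne_zero (by omega))
        (linFactor_ne_zero (by omega))) (linFactor_ne_zero (by omega)))
        (linFactor_ne_zero (by omega))) (pow_ne_zero _ ?_)
      rw [map_natCast]; positivity
    rw [show n + 1 + 1 = n + 2 by omega, show 2 * (n + 1) + 1 = 2 * n + 3 by omega]
    rw [hq, mainHarmonic_succ] at *
    rw [hq'] at *
    simp only [map_add, map_mul, map_neg, map_natCast, map_ofNat] at *
    generalize mainCore (n + 1) 0 * quadFactor 6 40 (n + 2) * linFactor 4 (2 * n + 3) = c' at *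
    generalize mainCore n 0 * quadFactor 6 40 (n + 1) * linFactor 4 (2 * n + 1) = c₀ at *
    generalize (C (16 / ((n + 1 : ℕ) : ℝ) ^ 2) : ℝ⟦X⟧) = α at *
    generalize (C (16 / ((2 * n + 1 : ℕ) : ℝ) ^ 2) : ℝ⟦X⟧) = β at *
    generalize (C (mainHarmonic n) : ℝ⟦X⟧) = h at *
    generalize (C s : ℝ⟦X⟧) = σ at *
    rw [h3] at *
    simp only [linFactor, quadFactor, map_neg, map_ofNat] at *
    generalize ((n + 1 : ℕ) : ℝ⟦X⟧) = j at *
    generalize ((2 * n + 1 : ℕ) : ℝ⟦X⟧) = x at *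
    refine ⟨-c * (j ^ 2 + 10 * j * X + 56 * X ^ 2) * (j ^ 2 + -2 * j * X + 32 * X ^ 2) * x * j ^ 2
      - 2 * σ * ((1 + h * X ^ 2) * x ^ 2 * j * (960 * j - 1280 * X) +
        j * (j ^ 2 + 6 * j * X + 40 * X ^ 2) * (j + 2 * X) *
          (16 * h * x ^ 2 + 16 * (h + α + β) * j ^ 2)), ?_⟩
    linear_combination j ^ 2 * hs - (j ^ 2 + 10 * j * X + 56 * X ^ 2) *
      (j ^ 2 + -2 * j * X + 32 * X ^ 2) * x * j ^ 2 * hc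
      + 2 * σ * j * (j ^ 2 + 6 * j * X + 40 * X ^ 2) * (j + 2 * X) * X ^ 2 *
        (x ^ 2 * h1 + j ^ 2 * h2)

lemma mainCompanion_zero_mul (n : ℕ) :
    mainCompanion n 0 * (8 * quadFactor 10 56 (n + 1) * quadFactor (-2) 32 (n + 1) *
      ((2 * n + 1 : ℕ) : ℝ⟦X⟧)) =
    -(mainCore (n + 1) 0 * quadFactor 6 40 (n + 2) * linFactor 4 (2 * n + 3) *
      mainNumerator X n 0) := by
  have hB := quadFactor_mul_inv (a := 6) (b := 40) (j := n + 2) (by omega)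
  have hQ := linFactor_mul_inv (a := 4) (j := 2 * n + 3) (by omega)
  have h8 := eight_mul_C
  rw [mainCore_succ_left, mainCompanion]
  simp only [add_zero, Nat.cast_zero]
  have h : quadFactor 6 40 (n + 2) * (quadFactor 6 40 (n + 2))⁻¹ *
      (linFactor 4 (2 * n + 3) * (linFactor 4 (2 * n + 3))⁻¹) = 1 := by rw [hB, hQ, one_mul]
  generalize (quadFactor 6 40 (n + 2))⁻¹ = b at *
  generalize (linFactor (-4) (2 * n + 1))⁻¹ = e at *
  generalize (linFactor 4 (2 * n + 2))⁻¹ = p at *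
  generalize (linFactor 4 (2 * n + 3))⁻¹ = q at *
  generalize quadFactor 6 40 (n + 2) = b' at *
  generalize linFactor 4 (2 * n + 3) = q' at *
  generalize mainNumerator X n 0 = N at *
  linear_combination mainCore n 0 * N * e * p * quadFactor 10 56 (n + 1) *
    quadFactor (-2) 32 (n + 1) * ((2 * n + 1 : ℕ) : ℝ⟦X⟧) * (h8 - h)

lemma coeff_mainCompanion_zero (n : ℕ) : coeff 3 (mainCompanion n 0) =
    altInvCentralBinom (n + 1) * (5 * mainHarmonic (n + 1) / ((n : ℝ) + 1) ^ 3
      - 620 / ((n : ℝ) + 1) ^ 5) := by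
  obtain ⟨c, hc⟩ := mainCore_boundary_modEq (n + 1)
  rw [show n + 1 + 1 = n + 2 by omega, show 2 * (n + 1) + 1 = 2 * n + 3 by omega] at hc
  have hG := mainCompanion_zero_mul n
  generalize altInvCentralBinom (n + 1) = q at *
  generalize mainHarmonic (n + 1) = h at *
  have e (r y : ℝ) (hy : 2 * ((n : ℝ) + 1) ^ 5 * (2 * n + 1) * r = y) :
      2 * ((n : ℝ⟦X⟧) + 1) ^ 5 * (2 * n + 1) * C r = C y := by
    simpa only [map_mul, map_add, map_pow, map_ofNat, map_natCast, map_one]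
      using congrArg (C : ℝ →+* ℝ⟦X⟧) hy
  have h0 := e ((10 * n + 7) / (2 * ((n : ℝ) + 1) ^ 2 * (2 * n + 1)))
    (((n : ℝ) + 1) ^ 3 * (10 * n + 7)) (by field_simp)
  have h1 := e (-5 / ((n : ℝ) + 1) ^ 3) (-10 * ((n : ℝ) + 1) ^ 2 * (2 * n + 1))
    (by field_simp; ring)
  have h2 := e (-(180 * n + 106) / (((n : ℝ) + 1) ^ 4 * (2 * n + 1)))
    (-2 * ((n : ℝ) + 1) * (180 * n + 106)) (by field_simp)
  have h3 := e (620 / ((n : ℝ) + 1) ^ 5) (1240 * (2 * n + 1)) (by field_simp; ring)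
  have hdvd : X ^ 4 ∣ mainCompanion n 0 -
      (C (-(q * ((10 * n + 7) / (2 * ((n : ℝ) + 1) ^ 2 * (2 * n + 1)))))
      + C (-(q * (-5 / ((n : ℝ) + 1) ^ 3))) * X
      + C (-(q * (-(180 * n + 106) / (((n : ℝ) + 1) ^ 4 * (2 * n + 1)) +
        h * ((10 * n + 7) / (2 * ((n : ℝ) + 1) ^ 2 * (2 * n + 1)))))) * X ^ 2
      + C (-(q * (620 / ((n : ℝ) + 1) ^ 5 + h * (-5 / ((n : ℝ) + 1) ^ 3)))) * X ^ 3) := by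
    refine dvd_sub_of_mul_dvd_sub (d := 8 * quadFactor 10 56 (n + 1) * quadFactor (-2) 32 (n + 1) *
      ((2 * n + 1 : ℕ) : ℝ⟦X⟧) * (2 * ((n : ℝ⟦X⟧) + 1) ^ 5 * (2 * n + 1))) ?_ ?_
    · have h0 := quadFactor_ne_zero (a := 10) (b := 56) (j := n + 1) (by omega)
      have h1 := quadFactor_ne_zero (a := -2) (b := 32) (j := n + 1) (by omega)
      simp only [map_mul, map_pow, map_add, map_ofNat, map_natCast, map_one]
      positivity
    have key (ν : ℝ⟦X⟧) (hν : ν = n) : 8 * quadFactor 10 56 (n + 1) * quadFactor (-2) 32 (n + 1) *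
        (2 * ν + 1) * ((ν + 1) ^ 3 * (10 * ν + 7)
          + (-10 * (ν + 1) ^ 2 * (2 * ν + 1)) * X
          + (-2 * (ν + 1) * (180 * ν + 106)) * X ^ 2 + (1240 * (2 * ν + 1)) * X ^ 3)
        - mainNumerator X ν 0 * (2 * (ν + 1) ^ 5 * (2 * ν + 1)) =
        X ^ 4 * ((2 * ν + 1) * ((ν + 1) ^ 3 * (72960 * ν + 47744)
          + (ν + 1) ^ 2 * (463360 * ν + 178432) * X
          - (ν + 1) * (1034240 * ν + 975872) * X ^ 2
          + 17776640 * (2 * ν + 1) * X ^ 3)) := by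
      subst hν
      simp only [quadFactor, mainNumerator, map_neg, map_ofNat]
      push_cast
      ring
    replace key := key n rfl
    simp only [map_neg, map_mul, map_add, map_pow, map_ofNat, map_natCast, map_one] at *
    rw [show ((2 * n + 1 : ℕ) : ℝ⟦X⟧) = 2 * n + 1 by push_cast; ring] at *
    generalize C ((10 * n + 7) / (2 * ((n : ℝ) + 1) ^ 2 * (2 * n + 1))) = r₀ at *
    generalize C (-5 / ((n : ℝ) + 1) ^ 3) = r₁ at *
    generalize C (-(180 * n + 106) / (((n : ℝ) + 1) ^ 4 * (2 * n + 1))) = r₂ at *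
    generalize C (620 / ((n : ℝ) + 1) ^ 5) = r₃ at *
    generalize mainCore (n + 1) 0 * quadFactor 6 40 (n + 2) * linFactor 4 (2 * n + 3) = c' at *
    generalize mainNumerator X n 0 = N at *
    generalize mainCompanion n 0 = G at *
    generalize hd : 8 * quadFactor 10 56 (n + 1) * quadFactor (-2) 32 (n + 1) *
      (2 * n + 1 : ℝ⟦X⟧) = d at *
    generalize hM : 2 * ((n : ℝ⟦X⟧) + 1) ^ 5 * (2 * n + 1) = M at *
    generalize (C q : ℝ⟦X⟧) = q' at *
    generalize (C h : ℝ⟦X⟧) = h' at *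
    generalize (n : ℝ⟦X⟧) = ν at *
    refine ⟨-c * N * M + q' * (1 + h' * X ^ 2) *
      ((2 * ν + 1) * ((ν + 1) ^ 3 * (72960 * ν + 47744)
          + (ν + 1) ^ 2 * (463360 * ν + 178432) * X
          - (ν + 1) * (1034240 * ν + 975872) * X ^ 2
          + 17776640 * (2 * ν + 1) * X ^ 3)) - q' * h' * (r₂ + r₃ * X) * d * M, ?_⟩
    linear_combination M * hG - N * M * hc + q' * (1 + h' * X ^ 2) * key
      + q' * (1 + h' * X ^ 2) * d * (h0 + X * h1 + X ^ 2 * h2 + X ^ 3 * h3)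
  rw [coeff_eq_of_X_pow_dvd_sub hdvd (by norm_num), coeff_three_cubic]
  ring

/-! ### Comparison of the second boundaries of the two pairs -/

lemma quadFactor_eq (a b : ℝ) (j : ℕ) :
    quadFactor a b j = C ((j : ℝ) ^ 2) + C (a * j) * X + C b * X ^ 2 := by
  simp [quadFactor]

lemma coeff_mul_quadFactor_zero (f : ℝ⟦X⟧) (a b : ℝ) (j : ℕ) :
    coeff 0 (f * quadFactor a b j) = coeff 0 f * (j : ℝ) ^ 2 := by
  simp [quadFactor]

lemma coeff_mul_quadFactor_one (f : ℝ⟦X⟧) (a b : ℝ) (j : ℕ) :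
    coeff 1 (f * quadFactor a b j) = coeff 1 f * (j : ℝ) ^ 2 + coeff 0 f * (a * j) := by
  rw [quadFactor_eq, mul_add, mul_add, ← mul_assoc, ← mul_assoc, pow_two X, ← mul_assoc, map_add,
    map_add, coeff_succ_mul_X, coeff_succ_mul_X, coeff_mul_C, coeff_mul_C, coeff_zero_mul_X,
    add_zero]

lemma coeff_mul_quadFactor_add_two (f : ℝ⟦X⟧) (a b : ℝ) (j i : ℕ) :
    coeff (i + 2) (f * quadFactor a b j) =
      coeff (i + 2) f * (j : ℝ) ^ 2 + coeff (i + 1) f * (a * j) + coeff i f * b := by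
  rw [quadFactor_eq, mul_add, mul_add, ← mul_assoc, ← mul_assoc, pow_two X, ← mul_assoc, map_add,
    map_add, coeff_succ_mul_X, coeff_succ_mul_X, coeff_succ_mul_X, coeff_mul_C, coeff_mul_C,
    coeff_mul_C]

lemma mainTerm_zero_succ (k : ℕ) : mainTerm 0 (k + 1) * quadFactor 6 40 (k + 2) =
    mainTerm 0 k * quadFactor 10 56 (k + 1) := by
  have hB := quadFactor_mul_inv (a := 6) (b := 40) (j := k + 2) (by omega)
  have hP := linFactor_mul_inv (a := 4) (j := k + 2) (by omega)
  simp only [mainTerm, mainCore_succ_right, mul_zero, zero_add]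
  rw [show k + 1 + 1 = k + 2 by omega]
  linear_combination mainCore 0 k * quadFactor 10 56 (k + 1) * linFactor 4 (k + 1) *
    (hB + quadFactor 6 40 (k + 2) * (quadFactor 6 40 (k + 2))⁻¹ * hP)

lemma mainTerm_zero_zero : mainTerm 0 0 * quadFactor 6 40 1 = 1 := by
  have h := linFactor_mul_inv (a := 4) (j := 1) le_rfl
  have h' := quadFactor_mul_inv (a := 6) (b := 40) (j := 1) le_rfl
  simp only [mainTerm, mainCore, Finset.prod_range_zero, Finset.prod_range_one, mul_zero, zero_add]
  linear_combination h + linFactor 4 1 * (linFactor 4 1)⁻¹ * h'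

lemma quadFactor_six_zero (j : ℕ) : quadFactor 6 0 j = (j : ℝ⟦X⟧) * linFactor 6 j := by
  simp only [quadFactor, linFactor, map_zero]; ring

lemma quadFactor_ten_sixteen (j : ℕ) : quadFactor 10 16 j = linFactor 8 j * linFactor 2 j := by
  simp only [quadFactor, linFactor, map_ofNat]; ring

lemma gaussTerm_zero_succ (k : ℕ) : gaussTerm 0 (k + 1) * quadFactor 6 0 (k + 2) =
    gaussTerm 0 k * quadFactor 10 16 (k + 1) := by
  have hP := linFactor_mul_inv (a := 6) (j := k + 2) (by omega)
  have h : (C ((k : ℝ) + 2)⁻¹ : ℝ⟦X⟧) * ((k + 2 : ℕ) : ℝ⟦X⟧) = 1 := by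
    rw [← map_natCast (C : ℝ →+* ℝ⟦X⟧), ← map_mul]
    push_cast
    rw [inv_mul_cancel₀ (by positivity), map_one]
  rw [gaussTerm_succ_right, quadFactor_six_zero, quadFactor_ten_sixteen, zero_add]
  linear_combination gaussTerm 0 k * (linFactor 8 (k + 1) * linFactor 2 (k + 1)) *
    (h + C ((k : ℝ) + 2)⁻¹ * ((k + 2 : ℕ) : ℝ⟦X⟧) * hP)

lemma gaussTerm_zero_zero : gaussTerm 0 0 * quadFactor 6 0 1 = 1 := by
  have h := linFactor_mul_inv (a := 6) (j := 1) le_rfl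
  simp only [gaussTerm, quadFactor_six_zero, Finset.prod_range_zero, Finset.prod_range_one,
    zero_add, Nat.cast_one]
  linear_combination h

lemma mainTerm_zero_modEq (k : ℕ) : (X : ℝ⟦X⟧) ^ 4 ∣ mainTerm 0 k * quadFactor 6 40 (k + 1) -
    gaussTerm 0 k * quadFactor 6 0 (k + 1) * (1 - C (160 * genHarmonic 3 k) * X ^ 3) := by
  induction k with
  | zero => simp [mainTerm_zero_zero, gaussTerm_zero_zero, genHarmonic_zero]
  | succ k ih =>
    obtain ⟨c, hc⟩ := ih
    have h1 := C_natCast_mul_eq (m := k + 1) (e := 3) (a := 160 / ((k + 1 : ℕ) : ℝ) ^ 3) (b := 160)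
      (by field_simp)
    have e1 : 160 * genHarmonic 3 (k + 1)
        = 160 * genHarmonic 3 k + 160 / ((k + 1 : ℕ) : ℝ) ^ 3 := by
      rw [genHarmonic_succ]; push_cast; ring
    rw [show k + 1 + 1 = k + 2 by omega, mainTerm_zero_succ, gaussTerm_zero_succ, e1, map_add]
    refine dvd_sub_of_mul_dvd_sub (d := quadFactor 6 40 (k + 1) * quadFactor 6 0 (k + 1)) ?_ ?_
    · rw [map_mul]
      exact mul_ne_zero (quadFactor_ne_zero (by omega)) (quadFactor_ne_zero (by omega))
    generalize (C (160 / ((k + 1 : ℕ) : ℝ) ^ 3) : ℝ⟦X⟧) = β at *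
    generalize (C (160 * genHarmonic 3 k) : ℝ⟦X⟧) = b at *
    generalize mainTerm 0 k = U at *
    generalize gaussTerm 0 k = V at *
    simp only [quadFactor, map_ofNat, map_zero] at *
    generalize ((k + 1 : ℕ) : ℝ⟦X⟧) = j at *
    refine ⟨c * (j ^ 2 + 10 * j * X + 56 * X ^ 2) * (j ^ 2 + 6 * j * X) +
      V * (j ^ 2 + 6 * j * X) * (-640 + 160 * b * j * X ^ 2 + 640 * b * X ^ 3 +
        β * (16 * j ^ 3 + 116 * j ^ 2 * X + 496 * j * X ^ 2 + 640 * X ^ 3)), ?_⟩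
    linear_combination (j ^ 2 + 10 * j * X + 56 * X ^ 2) * (j ^ 2 + 6 * j * X) * hc
      + V * (j ^ 2 + 6 * j * X) * j * X ^ 3 * h1

lemma gaussTerm_zero_modEq (k : ℕ) : (X : ℝ⟦X⟧) ^ 2 ∣
    gaussTerm 0 k * quadFactor 6 0 (k + 1) - (1 + C (4 * genHarmonic 1 k) * X) := by
  induction k with
  | zero => simp [gaussTerm_zero_zero, genHarmonic_zero]
  | succ k ih =>
    obtain ⟨c, hc⟩ := ih
    have h1 := C_natCast_mul_eq (m := k + 1) (e := 1) (a := 4 / ((k + 1 : ℕ) : ℝ)) (b := 4)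
      (by field_simp)
    have e1 : 4 * genHarmonic 1 (k + 1) = 4 * genHarmonic 1 k + 4 / ((k + 1 : ℕ) : ℝ) := by
      rw [genHarmonic_succ]; push_cast; ring
    rw [show k + 1 + 1 = k + 2 by omega, gaussTerm_zero_succ, e1, map_add]
    refine dvd_sub_of_mul_dvd_sub (d := quadFactor 6 0 (k + 1))
      (quadFactor_ne_zero (by omega)) ?_
    generalize (C (4 / ((k + 1 : ℕ) : ℝ)) : ℝ⟦X⟧) = γ at *
    generalize (C (4 * genHarmonic 1 k) : ℝ⟦X⟧) = g at *
    generalize gaussTerm 0 k = V at *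
    simp only [quadFactor, map_ofNat, map_zero] at *
    generalize ((k + 1 : ℕ) : ℝ⟦X⟧) = j at *
    refine ⟨c * (j ^ 2 + 10 * j * X + 16 * X ^ 2) +
      (16 + 4 * j * g + 16 * g * X - 6 * j * γ), ?_⟩
    linear_combination (j ^ 2 + 10 * j * X + 16 * X ^ 2) * hc - j * X * h1

lemma coeff_mainTerm_zero (k : ℕ) : coeff 3 (mainTerm 0 k) = coeff 3 (gaussTerm 0 k) +
    480 / ((k : ℝ) + 1) ^ 5 - 160 * (genHarmonic 1 k / ((k : ℝ) + 1) ^ 4) -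
      160 * (genHarmonic 3 k / ((k : ℝ) + 1) ^ 2) := by
  have hm := fun (i : ℕ) (hi : i < 4) => coeff_eq_of_X_pow_dvd_sub (mainTerm_zero_modEq k) hi
  have hg := fun (i : ℕ) (hi : i < 2) => coeff_eq_of_X_pow_dvd_sub (gaussTerm_zero_modEq k) hi
  have m0 := hm 0 (by norm_num)
  have m1 := hm 1 (by norm_num)
  have m2 := hm 2 (by norm_num)
  have m3 := hm 3 (by norm_num)
  have g0 := hg 0 (by norm_num)
  have g1 := hg 1 (by norm_num)
  rw [mul_sub, mul_one, ← mul_assoc, map_sub, coeff_mul_X_pow'] at m0 m1 m2 m3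
  norm_num only [coeff_mul_quadFactor_zero, coeff_mul_quadFactor_one,
    coeff_mul_quadFactor_add_two _ _ _ _ 0, coeff_mul_quadFactor_add_two _ _ _ _ 1,
    coeff_mul_C, if_true, if_false] at m0 m1 m2 m3
  rw [map_add, coeff_succ_mul_X, coeff_zero_C, coeff_one, if_neg (by norm_num), zero_add,
    coeff_mul_quadFactor_one] at g1
  rw [map_add, coeff_zero_mul_X, coeff_zero_one, add_zero, coeff_mul_quadFactor_zero] at g0
  rw [show ((k + 1 : ℕ) : ℝ) = (k : ℝ) + 1 by push_cast; ring] at *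
  have hK : (k : ℝ) + 1 ≠ 0 := by positivity
  generalize (k : ℝ) + 1 = K at *
  generalize coeff 0 (mainTerm 0 k) = u₀ at *
  generalize coeff 1 (mainTerm 0 k) = u₁ at *
  generalize coeff 2 (mainTerm 0 k) = u₂ at *
  generalize coeff 3 (mainTerm 0 k) = u₃ at *
  generalize coeff 0 (gaussTerm 0 k) = v₀ at *
  generalize coeff 1 (gaussTerm 0 k) = v₁ at *
  generalize coeff 2 (gaussTerm 0 k) = v₂ at *
  generalize coeff 3 (gaussTerm 0 k) = v₃ at *
  have hK2 : K ^ 2 ≠ 0 := pow_ne_zero 2 hK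
  obtain rfl : u₀ = v₀ := mul_right_cancel₀ hK2 (by linarith)
  obtain rfl : u₁ = v₁ := mul_right_cancel₀ hK2 (by linarith)
  field_simp
  linear_combination K ^ 3 * m3 - 6 * K ^ 2 * m2 - 40 * K * g1
    + (480 - 160 * genHarmonic 3 k * K ^ 3) * g0

/-! ### Elementary bounds -/

lemma abs_altInvCentralBinom_le (n : ℕ) : |altInvCentralBinom n| ≤ 1 := by
  have : (1 : ℝ) ≤ n.centralBinom := by exact_mod_cast n.centralBinom_pos
  rw [altInvCentralBinom, abs_div, abs_pow, abs_neg, abs_one, one_pow, Nat.abs_cast]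
  exact div_le_one_of_le₀ this (by positivity)

lemma genHarmonic_nonneg (s n : ℕ) : 0 ≤ genHarmonic s n :=
  Finset.sum_nonneg fun _ _ => by positivity

lemma genHarmonic_two_le (n : ℕ) : genHarmonic 2 n ≤ 2 := by
  have h (n : ℕ) : genHarmonic 2 (n + 1) ≤ 2 - 1 / ((n : ℝ) + 1) := by
    induction n with
    | zero => norm_num [genHarmonic_succ, genHarmonic_zero]
    | succ n ih =>
      rw [genHarmonic_succ]
      have h1 : 1 / ((n : ℝ) + 1) - 1 / ((n : ℝ) + 2) ^ 2 - 1 / ((n : ℝ) + 2) =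
        1 / (((n : ℝ) + 1) * (n + 2) ^ 2) := by field_simp; ring
      have h0 : 0 ≤ 1 / (((n : ℝ) + 1) * (n + 2) ^ 2) := by positivity
      push_cast
      rw [show (n : ℝ) + 1 + 1 = n + 2 by ring]
      linarith
  cases n with
  | zero => norm_num [genHarmonic_zero]
  | succ n =>
    have : 0 ≤ 1 / ((n : ℝ) + 1) := by positivity
    linarith [h n]

/-! ### A third Wilf–Zeilberger pair -/

/-- The beta value `n! k! / (n + k + 1)!`. -/
noncomputable def betaNat (n k : ℕ) : ℝ := (n.factorial * k.factorial : ℝ) / (n + k + 1).factorial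

lemma betaNat_comm (n k : ℕ) : betaNat n k = betaNat k n := by
  rw [betaNat, betaNat, add_comm n k, mul_comm]

lemma betaNat_succ_left (n k : ℕ) :
    betaNat (n + 1) k = betaNat n k * (n + 1) / ((n : ℝ) + k + 2) := by
  rw [betaNat, betaNat, show n + 1 + k + 1 = (n + k + 1) + 1 by ring, Nat.factorial_succ,
    Nat.factorial_succ (n + k + 1)]
  push_cast
  field_simp
  ring

lemma betaNat_succ_right (n k : ℕ) :
    betaNat n (k + 1) = betaNat n k * (k + 1) / ((n : ℝ) + k + 2) := by
  rw [betaNat_comm, betaNat_succ_left, betaNat_comm, add_comm (k : ℝ) n]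

lemma betaNat_zero_left (k : ℕ) : betaNat 0 k = 1 / ((k : ℝ) + 1) := by
  rw [betaNat, zero_add, Nat.factorial_succ]
  push_cast
  field_simp
  simp

lemma betaNat_nonneg (n k : ℕ) : 0 ≤ betaNat n k := by unfold betaNat; positivity

lemma betaNat_le (n k : ℕ) : betaNat n k ≤ 1 / ((n : ℝ) + k + 1) := by
  induction n with
  | zero => rw [betaNat_zero_left]; simp
  | succ n ih =>
    have h : ((n : ℝ) + 1) / (n + k + 1) ≤ 1 := by
      rw [div_le_one (by positivity)]; linarith [(Nat.cast_nonneg k : (0 : ℝ) ≤ k)]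
    calc betaNat (n + 1) k = betaNat n k * (n + 1) / ((n : ℝ) + k + 2) := betaNat_succ_left n k
      _ ≤ 1 / ((n : ℝ) + k + 1) * (n + 1) / ((n : ℝ) + k + 2) := by gcongr
      _ = ((n : ℝ) + 1) / (n + k + 1) / ((n : ℝ) + k + 2) := by ring
      _ ≤ 1 / ((n : ℝ) + k + 2) := by gcongr
      _ = 1 / (((n + 1 : ℕ) : ℝ) + k + 1) := by push_cast; ring

/-- The harmonic factor of the pair `koecherTerm`, `koecherCompanion`. -/
noncomputable def koecherHarmonic (n k : ℕ) : ℝ :=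
  genHarmonic 2 (n + k + 1) - genHarmonic 2 k - 2 * genHarmonic 2 n

lemma koecherHarmonic_succ_left (n k : ℕ) : koecherHarmonic (n + 1) k =
    koecherHarmonic n k + 1 / ((n : ℝ) + k + 2) ^ 2 - 2 / ((n : ℝ) + 1) ^ 2 := by
  rw [koecherHarmonic, koecherHarmonic, show n + 1 + k + 1 = (n + k + 1) + 1 by ring,
    genHarmonic_succ _ (n + k + 1), genHarmonic_succ _ n]
  push_cast
  ring

lemma koecherHarmonic_succ_right (n k : ℕ) : koecherHarmonic n (k + 1) =
    koecherHarmonic n k + 1 / ((n : ℝ) + k + 2) ^ 2 - 1 / ((k : ℝ) + 1) ^ 2 := by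
  rw [koecherHarmonic, koecherHarmonic, show n + (k + 1) + 1 = (n + k + 1) + 1 by ring,
    genHarmonic_succ _ (n + k + 1), genHarmonic_succ _ k]
  push_cast
  ring

lemma abs_koecherHarmonic_le (n k : ℕ) : |koecherHarmonic n k| ≤ 6 := by
  have h := fun i => genHarmonic_nonneg 2 i
  have h' := fun i => genHarmonic_two_le i
  rw [koecherHarmonic, abs_le]
  constructor <;> linarith [h n, h k, h (n + k + 1), h' n, h' k, h' (n + k + 1)]

/-- First component of the Wilf–Zeilberger pair accelerating `ζ(5)`. -/
noncomputable def koecherTerm (n k : ℕ) : ℝ :=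
  altInvCentralBinom n * betaNat n k ^ 4 * (n + 2 * k + 2) * koecherHarmonic n k

/-- Second component of the Wilf–Zeilberger pair accelerating `ζ(5)`. -/
noncomputable def koecherCompanion (n k : ℕ) : ℝ :=
  altInvCentralBinom n * betaNat n k ^ 4 *
    ((2 * k ^ 2 + 6 * (n + 1) * k + 5 * (n + 1) ^ 2) * koecherHarmonic n k - 1) / (2 * (2 * n + 1))

lemma koecher_wz (n k : ℕ) : koecherTerm n k - koecherTerm (n + 1) k
    = koecherCompanion n k - koecherCompanion n (k + 1) := by
  obtain ⟨s, h, h'⟩ := altInvCentralBinom_eq n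
  simp only [koecherTerm, koecherCompanion, koecherHarmonic_succ_left, koecherHarmonic_succ_right,
    betaNat_succ_left, betaNat_succ_right, h, h']
  generalize koecherHarmonic n k = g
  generalize betaNat n k = b
  push_cast
  field_simp
  ring

lemma abs_koecherTerm_le (n k : ℕ) :
    |koecherTerm n k| ≤ 12 / ((k : ℝ) + 1) ^ 2 * (1 / ((n : ℝ) + 1)) := by
  have hb := betaNat_le n k
  have hb0 := betaNat_nonneg n k
  have hn : (0 : ℝ) ≤ n := n.cast_nonneg
  have hk : (0 : ℝ) ≤ k := k.cast_nonneg
  rw [koecherTerm, abs_mul, abs_mul, abs_mul, abs_of_nonneg (pow_nonneg hb0 4),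
    abs_of_nonneg (by positivity : (0 : ℝ) ≤ n + 2 * k + 2)]
  calc |altInvCentralBinom n| * betaNat n k ^ 4 * (n + 2 * k + 2) * |koecherHarmonic n k|
      ≤ 1 * (1 / ((n : ℝ) + k + 1)) ^ 4 * (2 * ((n : ℝ) + k + 1)) * 6 := by
        gcongr
        · exact abs_altInvCentralBinom_le n
        · linarith
        · exact abs_koecherHarmonic_le n k
    _ = 12 / (((n : ℝ) + k + 1) ^ 2 * ((n : ℝ) + k + 1)) := by field_simp; norm_num
    _ ≤ 12 / (((k : ℝ) + 1) ^ 2 * ((n : ℝ) + 1)) := by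
        gcongr <;> linarith
    _ = _ := by field_simp

lemma abs_koecherCompanion_le (n k : ℕ) :
    |koecherCompanion n k| ≤ 31 * (1 / ((k : ℝ) + 1)) := by
  have hb := betaNat_le n k
  have hb0 := betaNat_nonneg n k
  have hn : (0 : ℝ) ≤ n := n.cast_nonneg
  have hk : (0 : ℝ) ≤ k := k.cast_nonneg
  have hh := abs_koecherHarmonic_le n k
  have h1 : |(2 * k ^ 2 + 6 * (n + 1) * k + 5 * (n + 1) ^ 2) * koecherHarmonic n k - 1| ≤
      31 * ((n : ℝ) + k + 1) ^ 2 := by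
    refine (abs_sub _ _).trans ?_
    rw [abs_mul, abs_of_nonneg (by positivity :
      (0 : ℝ) ≤ 2 * k ^ 2 + 6 * (n + 1) * k + 5 * (n + 1) ^ 2), abs_one]
    have : (2 * k ^ 2 + 6 * (n + 1) * k + 5 * (n + 1) ^ 2 : ℝ) * |koecherHarmonic n k| ≤
        (2 * k ^ 2 + 6 * (n + 1) * k + 5 * (n + 1) ^ 2 : ℝ) * 6 := by gcongr
    nlinarith [mul_nonneg hn hk]
  rw [koecherCompanion, abs_div, abs_mul, abs_mul, abs_of_nonneg (pow_nonneg hb0 4),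
    abs_of_nonneg (by positivity : (0 : ℝ) ≤ 2 * (2 * n + 1))]
  calc |altInvCentralBinom n| * betaNat n k ^ 4 *
        |(2 * k ^ 2 + 6 * (n + 1) * k + 5 * (n + 1) ^ 2) * koecherHarmonic n k - 1| /
          (2 * (2 * n + 1))
      ≤ 1 * (1 / ((n : ℝ) + k + 1)) ^ 4 * (31 * ((n : ℝ) + k + 1) ^ 2) / 1 := by
        gcongr
        · exact abs_altInvCentralBinom_le n
        · linarith
    _ = 31 / (((n : ℝ) + k + 1) * ((n : ℝ) + k + 1)) := by field_simp
    _ ≤ 31 / (1 * ((k : ℝ) + 1)) := by gcongr <;> linarith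
    _ = _ := by ring

theorem tendsto_sum_koecherCompanion : Tendsto
    (fun N => ∑ n ∈ Finset.range N, koecherCompanion n 0) atTop
    (𝓝 (∑' k, koecherTerm 0 k)) := by
  have hs : Summable fun k : ℕ => 12 / ((k : ℝ) + 1) ^ 2 := by
    have := ((summable_nat_add_iff 1).2 (Real.summable_one_div_nat_pow.2 one_lt_two)).mul_left 12
    refine this.congr fun k => ?_
    push_cast; ring
  refine tendsto_sum_of_wz koecher_wz hs (fun n k => ?_) (fun k => ?_) (fun n => ?_)
  · refine (abs_koecherTerm_le n k).trans (mul_le_of_le_one_right (by positivity) ?_)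
    rw [div_le_one (by positivity)]; linarith [(Nat.cast_nonneg n : (0 : ℝ) ≤ n)]
  · refine squeeze_zero_norm (fun n => abs_koecherTerm_le n k) ?_
    simpa using
      (tendsto_one_div_add_atTop_nhds_zero_nat (𝕜 := ℝ)).const_mul (12 / ((k : ℝ) + 1) ^ 2)
  · refine squeeze_zero_norm (fun k => abs_koecherCompanion_le n k) ?_
    simpa using (tendsto_one_div_add_atTop_nhds_zero_nat (𝕜 := ℝ)).const_mul 31

lemma koecherTerm_zero (k : ℕ) : koecherTerm 0 k = 2 / ((k : ℝ) + 1) ^ 5 := by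
  rw [koecherTerm, koecherHarmonic, betaNat_zero_left, zero_add, genHarmonic_succ,
    genHarmonic_zero]
  simp only [altInvCentralBinom, Nat.centralBinom_zero]
  push_cast
  field_simp
  ring

lemma koecherCompanion_zero (n : ℕ) : koecherCompanion n 0 = altInvCentralBinom (n + 1) *
    (5 * genHarmonic 2 (n + 1) / ((n : ℝ) + 1) ^ 3 - 9 / ((n : ℝ) + 1) ^ 5) := by
  obtain ⟨s, h, h'⟩ := altInvCentralBinom_eq n
  rw [koecherCompanion, betaNat_comm, betaNat_zero_left, koecherHarmonic, h, h', add_zero,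
    genHarmonic_succ, genHarmonic_zero]
  push_cast
  field_simp
  ring

/-! ### Linear Euler sums of weight five -/

/-- The summand `m⁻ᵖ n⁻ᑫ (m + n)⁻ʳ` of the Tornheim double sum, for `m = i + 1`, `n = j + 1`. -/
noncomputable def tornheim (p q r : ℕ) (x : ℕ × ℕ) : ℝ :=
  1 / (((x.1 : ℝ) + 1) ^ p * ((x.2 : ℝ) + 1) ^ q * ((x.1 : ℝ) + x.2 + 2) ^ r)

lemma tornheim_nonneg (p q r : ℕ) (x : ℕ × ℕ) : 0 ≤ tornheim p q r x := by
  unfold tornheim; positivity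

lemma tornheim_swap (p q r : ℕ) (x : ℕ × ℕ) : tornheim p q r x.swap = tornheim q p r x := by
  simp only [tornheim, Prod.fst_swap, Prod.snd_swap]; ring

lemma tsum_tornheim_swap (p q r : ℕ) : ∑' x, tornheim p q r x = ∑' x, tornheim q p r x := by
  rw [← (Equiv.prodComm ℕ ℕ).tsum_eq]
  exact tsum_congr fun x => tornheim_swap p q r x

lemma tornheim_succ_succ (p q r : ℕ) (x : ℕ × ℕ) : tornheim (p + 1) (q + 1) r x =
    tornheim p (q + 1) (r + 1) x + tornheim (p + 1) q (r + 1) x := by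
  simp only [tornheim]
  field_simp
  ring

lemma summable_one_div_succ_pow {p : ℕ} (hp : 1 < p) :
    Summable fun k : ℕ => 1 / ((k : ℝ) + 1) ^ p := by
  simpa using (summable_nat_add_iff 1).2 (Real.summable_one_div_nat_pow.2 hp)

lemma summable_tornheim_zero {p q : ℕ} (hp : 1 < p) (hq : 1 < q) : Summable (tornheim p q 0) := by
  refine ((summable_one_div_succ_pow hp).mul_of_nonneg (summable_one_div_succ_pow hq)
    (fun _ => by positivity) (fun _ => by positivity)).congr fun x => ?_
  simp only [tornheim]; field_simp

/-- Moving powers from `m + n` to `m` and `n` increases the Tornheim summand. -/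
lemma tornheim_add_le (p q a b : ℕ) (x : ℕ × ℕ) :
    tornheim p q (a + b) x ≤ tornheim (p + a) (q + b) 0 x := by
  simp only [tornheim, pow_zero, mul_one]
  have h1 : (0 : ℝ) ≤ x.1 := Nat.cast_nonneg _
  have h2 : (0 : ℝ) ≤ x.2 := Nat.cast_nonneg _
  refine one_div_le_one_div_of_le (by positivity) ?_
  calc ((x.1 : ℝ) + 1) ^ (p + a) * ((x.2 : ℝ) + 1) ^ (q + b)
      = ((x.1 : ℝ) + 1) ^ p * ((x.2 : ℝ) + 1) ^ q *
        (((x.1 : ℝ) + 1) ^ a * ((x.2 : ℝ) + 1) ^ b) := by ring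
    _ ≤ ((x.1 : ℝ) + 1) ^ p * ((x.2 : ℝ) + 1) ^ q *
        (((x.1 : ℝ) + x.2 + 2) ^ a * ((x.1 : ℝ) + x.2 + 2) ^ b) := by gcongr <;> linarith
    _ = _ := by ring

lemma summable_tornheim {p q a b : ℕ} (hp : 1 < p + a) (hq : 1 < q + b) :
    Summable (tornheim p q (a + b)) :=
  .of_nonneg_of_le (tornheim_nonneg p q _) (tornheim_add_le p q a b) (summable_tornheim_zero hp hq)

lemma hasSum_sum_antidiagonal {f : ℕ × ℕ → ℝ} (hf : Summable f) :
    HasSum (fun s => ∑ x ∈ Finset.HasAntidiagonal.antidiagonal s, f x) (∑' x, f x) := by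
  have h := (Finset.HasAntidiagonal.sigmaAntidiagonalEquivProd (A := ℕ)).hasSum_iff.2 hf.hasSum
  refine h.sigma fun s => ?_
  rw [← Finset.sum_coe_sort]
  exact hasSum_fintype _

lemma hasSum_genHarmonic_div_pow {p r : ℕ} (h : Summable (tornheim p 0 r)) :
    HasSum (fun k : ℕ => genHarmonic p k / ((k : ℝ) + 1) ^ r) (∑' x, tornheim p 0 r x) := by
  have h1 : HasSum (fun k : ℕ => genHarmonic p (k + 1) / (((k + 1 : ℕ) : ℝ) + 1) ^ r)
      (∑' x, tornheim p 0 r x) := by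
    refine (hasSum_sum_antidiagonal h).congr_fun fun s => Eq.symm ?_
    rw [Finset.Nat.sum_antidiagonal_eq_sum_range_succ_mk, genHarmonic, Finset.sum_div]
    refine Finset.sum_congr rfl fun i hi => ?_
    rw [tornheim]
    have : i ≤ s := by simpa [Nat.lt_succ_iff] using hi
    push_cast [Nat.cast_sub this]
    rw [pow_zero, mul_one, div_div]
    congr 2
    ring
  simpa [genHarmonic_zero] using (hasSum_nat_add_iff (f := fun k : ℕ =>
    genHarmonic p k / ((k : ℝ) + 1) ^ r) 1).1 h1

lemma hasSum_one_div_mul (m : ℕ) :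
    HasSum (fun n : ℕ => 1 / ((n : ℝ) + 1) - 1 / ((n : ℝ) + m + 1)) (genHarmonic 1 m) := by
  induction m with
  | zero => simp [genHarmonic_zero]
  | succ m ih =>
    have h : HasSum (fun n : ℕ => 1 / ((n : ℝ) + m + 1) - 1 / ((n : ℝ) + m + 2))
        (1 / ((m : ℝ) + 1)) := by
      rw [hasSum_iff_tendsto_nat_of_nonneg]
      · have (N : ℕ) : ∑ n ∈ Finset.range N, (1 / ((n : ℝ) + m + 1) - 1 / ((n : ℝ) + m + 2))
            = 1 / ((m : ℝ) + 1) - 1 / (((N + m : ℕ) : ℝ) + 1) := by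
          have := Finset.sum_range_sub' (fun n : ℕ => 1 / ((n : ℝ) + m + 1)) N
          push_cast at this ⊢
          rw [zero_add] at this
          rw [← this]
          refine Finset.sum_congr rfl fun n _ => ?_
          congr 2
          ring
        simp only [this]
        have := (tendsto_const_nhds (x := 1 / ((m : ℝ) + 1))).sub
          ((tendsto_add_atTop_iff_nat m).2 (tendsto_one_div_add_atTop_nhds_zero_nat (𝕜 := ℝ)))
        simpa only [sub_zero] using this
      · intro n
        rw [sub_nonneg]
        gcongr
        norm_num
    rw [genHarmonic_succ, pow_one]
    refine (ih.add h).congr_fun fun n => ?_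
    push_cast
    ring

lemma tsum_tornheim_three_one_one : ∑' x, tornheim 3 1 1 x =
    ∑' x, tornheim 1 0 4 x + ∑' k : ℕ, 1 / ((k : ℝ) + 1) ^ 5 := by
  have hs : Summable (tornheim 3 1 1) := summable_tornheim (a := 0) (b := 1) (by simp) (by simp)
  have h4 : Summable (tornheim 1 0 4) := summable_tornheim (a := 1) (b := 3) (by simp) (by simp)
  have h5 := summable_one_div_succ_pow (p := 5) (by norm_num)
  rw [hs.tsum_prod, ← (hasSum_genHarmonic_div_pow h4).tsum_eq,
    ← (hasSum_genHarmonic_div_pow h4).summable.tsum_add h5]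
  refine tsum_congr fun i => ?_
  have h := (hasSum_one_div_mul (i + 1)).mul_left (1 / ((i : ℝ) + 1) ^ 4)
  rw [genHarmonic_succ] at h
  refine (h.congr_fun fun n => ?_).tsum_eq.trans ?_
  · simp only [tornheim]
    push_cast
    field_simp
    ring
  · field_simp

/-- `ζ(2) ζ(3)` as a combination of Euler sums. -/
lemma tsum_mul_tsum_eq : (∑' k : ℕ, 1 / ((k : ℝ) + 1) ^ 2) * ∑' k : ℕ, 1 / ((k : ℝ) + 1) ^ 3 =
    ∑' x, tornheim 2 0 3 x + ∑' x, tornheim 3 0 2 x + ∑' k : ℕ, 1 / ((k : ℝ) + 1) ^ 5 := by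
  have hb := hasSum_genHarmonic_div_pow (p := 2) (r := 3)
    (summable_tornheim (a := 1) (b := 2) (by simp) (by simp))
  have hc := hasSum_genHarmonic_div_pow (p := 3) (r := 2)
    (summable_tornheim (a := 0) (b := 2) (by simp) (by simp))
  have h := ((hb.add hc).add (summable_one_div_succ_pow (p := 5) (by norm_num)).hasSum)
  refine tendsto_nhds_unique ?_ h.tendsto_sum_nat
  have hN (N : ℕ) : ∑ k ∈ Finset.range N, (genHarmonic 2 k / ((k : ℝ) + 1) ^ 3 +
      genHarmonic 3 k / ((k : ℝ) + 1) ^ 2 + 1 / ((k : ℝ) + 1) ^ 5) =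
      genHarmonic 2 N * genHarmonic 3 N := by
    induction N with
    | zero => simp [genHarmonic_zero]
    | succ N ih =>
      rw [Finset.sum_range_succ, ih, genHarmonic_succ, genHarmonic_succ]
      field_simp
      ring
  simp only [hN]
  exact (summable_one_div_succ_pow (by norm_num)).hasSum.tendsto_sum_nat.mul
    (summable_one_div_succ_pow (by norm_num)).hasSum.tendsto_sum_nat

lemma tsum_tornheim_zero {p q : ℕ} (hp : 1 < p) (hq : 1 < q) : ∑' x, tornheim p q 0 x =
    (∑' k : ℕ, 1 / ((k : ℝ) + 1) ^ p) * ∑' k : ℕ, 1 / ((k : ℝ) + 1) ^ q := by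
  have h1 := summable_one_div_succ_pow hp
  have h2 := summable_one_div_succ_pow hq
  rw [h1.tsum_mul_tsum h2 (h1.mul_of_nonneg h2 (fun _ => by positivity) (fun _ => by positivity))]
  refine tsum_congr fun x => ?_
  simp only [tornheim]; field_simp

lemma tsum_tornheim_succ_succ {p q r : ℕ} (ha : Summable (tornheim p (q + 1) (r + 1)))
    (hb : Summable (tornheim (p + 1) q (r + 1))) : ∑' x, tornheim (p + 1) (q + 1) r x =
      ∑' x, tornheim p (q + 1) (r + 1) x + ∑' x, tornheim (p + 1) q (r + 1) x := by
  rw [← ha.tsum_add hb]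
  exact tsum_congr fun x => tornheim_succ_succ p q r x

theorem euler_sums :
    ∑' x, tornheim 1 0 4 x = 2 * ∑' k : ℕ, 1 / ((k : ℝ) + 1) ^ 5 -
      (∑' k : ℕ, 1 / ((k : ℝ) + 1) ^ 2) * ∑' k : ℕ, 1 / ((k : ℝ) + 1) ^ 3 ∧
    ∑' x, tornheim 2 0 3 x = 3 * ((∑' k : ℕ, 1 / ((k : ℝ) + 1) ^ 2) *
      ∑' k : ℕ, 1 / ((k : ℝ) + 1) ^ 3) - 11 / 2 * ∑' k : ℕ, 1 / ((k : ℝ) + 1) ^ 5 ∧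
    ∑' x, tornheim 3 0 2 x = 9 / 2 * ∑' k : ℕ, 1 / ((k : ℝ) + 1) ^ 5 -
      2 * ((∑' k : ℕ, 1 / ((k : ℝ) + 1) ^ 2) * ∑' k : ℕ, 1 / ((k : ℝ) + 1) ^ 3) := by
  have s131 : Summable (tornheim 1 3 1) := summable_tornheim (a := 1) (b := 0) (by simp) (by simp)
  have s221 : Summable (tornheim 2 2 1) := summable_tornheim (a := 1) (b := 0) (by simp) (by simp)
  have s122 : Summable (tornheim 1 2 2) := summable_tornheim (a := 1) (b := 1) (by simp) (by simp)
  have s212 : Summable (tornheim 2 1 2) := summable_tornheim (a := 1) (b := 1) (by simp) (by simp)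
  have s302 : Summable (tornheim 3 0 2) := summable_tornheim (a := 0) (b := 2) (by simp) (by simp)
  have s113 : Summable (tornheim 1 1 3) := summable_tornheim (a := 1) (b := 2) (by simp) (by simp)
  have s203 : Summable (tornheim 2 0 3) := summable_tornheim (a := 1) (b := 2) (by simp) (by simp)
  have s014 : Summable (tornheim 0 1 4) := summable_tornheim (a := 3) (b := 1) (by simp) (by simp)
  have s104 : Summable (tornheim 1 0 4) := summable_tornheim (a := 1) (b := 3) (by simp) (by simp)
  have e230 := tsum_tornheim_succ_succ s131 s221
  have e221 := tsum_tornheim_succ_succ s122 s212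
  have e311 := tsum_tornheim_succ_succ s212 s302
  have e212 := tsum_tornheim_succ_succ s113 s203
  have e113 := tsum_tornheim_succ_succ s014 s104
  have := tsum_tornheim_zero (p := 2) (q := 3) (by norm_num) (by norm_num)
  have := tsum_mul_tsum_eq
  have := tsum_tornheim_three_one_one
  have := tsum_tornheim_swap 1 3 1
  have := tsum_tornheim_swap 1 2 2
  have := tsum_tornheim_swap 0 1 4
  norm_num at e230 e221 e311 e212 e113
  refine ⟨?_, ?_, ?_⟩ <;> linarith

/-! ### Assembly -/

lemma summable_coeff_gaussTerm : Summable fun k => coeff 3 (gaussTerm 0 k) := by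
  have hs : Summable fun k => truncNorm (gaussTerm 0 k) :=
    summable_of_sq_mul_cube_le (truncNorm_nonneg (gaussTerm 0 0)) (fun _ => truncNorm_nonneg _)
      truncNorm_gaussTerm_zero_sq_le
  exact .of_norm_bounded (hs.mul_left (10 ^ 12)) fun k => abs_coeff_le_truncNorm le_rfl _

lemma tsum_one_div_succ_pow_two : ∑' k : ℕ, 1 / ((k : ℝ) + 1) ^ 2 = Real.pi ^ 2 / 6 := by
  have h := hasSum_zeta_two.tsum_eq
  rw [(Real.summable_one_div_nat_pow.2 one_lt_two).tsum_eq_zero_add] at h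
  simpa using h

lemma riemannZeta_eq_tsum_one_div_succ_pow {p : ℕ} (hp : 1 < p) :
    riemannZeta p = ((∑' k : ℕ, 1 / ((k : ℝ) + 1) ^ p : ℝ) : ℂ) := by
  have h : ∑' n : ℕ, 1 / (n : ℂ) ^ p = ((∑' n : ℕ, 1 / (n : ℝ) ^ p : ℝ) : ℂ) := by
    push_cast; rfl
  rw [zeta_nat_eq_tsum_of_gt_one hp, h,
    (Real.summable_one_div_nat_pow.2 hp).tsum_eq_zero_add]
  simp [show p ≠ 0 by omega]

lemma tsum_coeff_mainTerm_zero : ∑' k, coeff 3 (mainTerm 0 k) =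
    448 * ((∑' k : ℕ, 1 / ((k : ℝ) + 1) ^ 2) * ∑' k : ℕ, 1 / ((k : ℝ) + 1) ^ 3)
      - 632 * ∑' k : ℕ, 1 / ((k : ℝ) + 1) ^ 5 := by
  have h5 := (summable_one_div_succ_pow (p := 5) (by norm_num)).hasSum
  have ha := hasSum_genHarmonic_div_pow (p := 1) (r := 4)
    (summable_tornheim (a := 1) (b := 3) (by simp) (by simp))
  have hb := hasSum_genHarmonic_div_pow (p := 2) (r := 3)
    (summable_tornheim (a := 1) (b := 2) (by simp) (by simp))
  have hc := hasSum_genHarmonic_div_pow (p := 3) (r := 2)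
    (summable_tornheim (a := 0) (b := 2) (by simp) (by simp))
  have hg : HasSum (fun l => coeff 3 (gaussCompanion l 0)) _ :=
    (((h5.mul_left (-104)).sub (hb.mul_left 32)).sub (hc.mul_left 32)).congr_fun fun l => by
      rw [coeff_gaussCompanion_zero]; ring
  have hg' := tendsto_nhds_unique tendsto_sum_gaussCompanion hg.tendsto_sum_nat
  have hm : HasSum (fun k => coeff 3 (mainTerm 0 k)) _ :=
    (((summable_coeff_gaussTerm.hasSum.add (h5.mul_left 480)).sub (ha.mul_left 160)).sub
      (hc.mul_left 160)).congr_fun fun k => by rw [coeff_mainTerm_zero]; ring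
  obtain ⟨ea, eb, ec⟩ := euler_sums
  rw [hm.tsum_eq, hg', ea, eb, ec]
  ring

lemma tsum_koecherTerm_zero :
    ∑' k, koecherTerm 0 k = 2 * ∑' k : ℕ, 1 / ((k : ℝ) + 1) ^ 5 := by
  rw [← tsum_mul_left]
  exact tsum_congr fun k => by rw [koecherTerm_zero]; ring

lemma pow_mul_risingFactorial_div (n : ℕ) :
    (-1 / 4 : ℝ) ^ n * risingFactorial 1 n / risingFactorial (1 / 2) n = altInvCentralBinom n := by
  induction n with
  | zero => simp [risingFactorial, altInvCentralBinom]
  | succ n ih =>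
    obtain ⟨s, h, h'⟩ := altInvCentralBinom_eq n
    have hr (a : ℝ) : risingFactorial a (n + 1) = risingFactorial a n * (a + n) :=
      Finset.prod_range_succ _ _
    have : (-1 / 4 : ℝ) ^ (n + 1) * risingFactorial 1 (n + 1) / risingFactorial (1 / 2) (n + 1) =
        (-1 / 4 : ℝ) ^ n * risingFactorial 1 n / risingFactorial (1 / 2) n *
          (-1 / 4 * (1 + n) / (1 / 2 + n)) := by
      rw [hr, hr, pow_succ, div_mul_div_comm]; congr 1; ring
    rw [this, ih, h, h']
    push_cast
    field_simp
    ring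

lemma hasSum_altInvCentralBinom : HasSum (fun n : ℕ => altInvCentralBinom (n + 1) *
    (genHarmonic 2 (2 * (n + 1)) / ((n : ℝ) + 1) ^ 3 - 32 / (5 * ((n : ℝ) + 1) ^ 5)))
    (28 / 5 * ((∑' k : ℕ, 1 / ((k : ℝ) + 1) ^ 2) * ∑' k : ℕ, 1 / ((k : ℝ) + 1) ^ 3)
      - 41 / 5 * ∑' k : ℕ, 1 / ((k : ℝ) + 1) ^ 5) := by
  have hs : Summable (fun n : ℕ => altInvCentralBinom (n + 1) *
      (genHarmonic 2 (2 * (n + 1)) / ((n : ℝ) + 1) ^ 3 - 32 / (5 * ((n : ℝ) + 1) ^ 5))) := by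
    refine .of_norm_bounded (((summable_one_div_succ_pow (p := 3) (by norm_num)).mul_left 2).add
      ((summable_one_div_succ_pow (p := 5) (by norm_num)).mul_left (32 / 5))) fun n => ?_
    rw [norm_mul]
    refine (mul_le_of_le_one_left (norm_nonneg _) (abs_altInvCentralBinom_le _)).trans
      ((norm_sub_le _ _).trans ?_)
    have h0 := genHarmonic_nonneg 2 (2 * (n + 1))
    have h2 := genHarmonic_two_le (2 * (n + 1))
    rw [Real.norm_of_nonneg (by positivity), Real.norm_of_nonneg (by positivity)]
    refine add_le_add ?_ (le_of_eq (by field_simp))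
    rw [mul_one_div]
    gcongr
  have h := ((tendsto_sum_mainCompanion.sub (tendsto_sum_koecherCompanion.const_mul 12))).const_mul
    (1 / 80 : ℝ)
  rw [tsum_coeff_mainTerm_zero, tsum_koecherTerm_zero] at h
  convert hs.hasSum using 1
  refine tendsto_nhds_unique ?_ hs.hasSum.tendsto_sum_nat
  refine (h.congr fun N => ?_).trans (le_of_eq ?_)
  · rw [Finset.mul_sum, ← Finset.sum_sub_distrib, Finset.mul_sum]
    refine Finset.sum_congr rfl fun n _ => ?_
    rw [coeff_mainCompanion_zero, koecherCompanion_zero, mainHarmonic]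
    field_simp
    ring
  · congr 1
    ring

/-- `∑_{n≥1} (−1/4)^n (1)ₙ/(1/2)ₙ [ H_{2n}^{(2)}/n³ − 32/(5n^5) ]
    = −(41/5)ζ(5) + (14/15)π²ζ(3)`. -/
theorem harmonic2n2_zeta5_series :
    ∑' n : ℕ, ((((-1 / 4 : ℝ) ^ (n + 1) * risingFactorial 1 (n + 1) /
        risingFactorial (1 / 2) (n + 1) *
        (genHarmonic 2 (2 * (n + 1)) / ((n : ℝ) + 1) ^ 3 -
          32 / (5 * ((n : ℝ) + 1) ^ 5)) : ℝ)) : ℂ)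
      = -(41 / 5) * riemannZeta 5 + 14 / 15 * (Real.pi : ℂ) ^ 2 * riemannZeta 3 := by
  have h5 := riemannZeta_eq_tsum_one_div_succ_pow (p := 5) (by norm_num)
  have h3 := riemannZeta_eq_tsum_one_div_succ_pow (p := 3) (by norm_num)
  rw [Nat.cast_ofNat] at h5 h3
  simp only [pow_mul_risingFactorial_div]
  rw [← Complex.ofReal_tsum, hasSum_altInvCentralBinom.tsum_eq, h5, h3, tsum_one_div_succ_pow_two,
    Complex.ofReal_sub, Complex.ofReal_mul, Complex.ofReal_mul, Complex.ofReal_mul]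
  generalize ∑' k : ℕ, 1 / ((k : ℝ) + 1) ^ 5 = u
  generalize ∑' k : ℕ, 1 / ((k : ℝ) + 1) ^ 3 = v
  push_cast
  ring
end

section
/- With p₀(n) := 205n² − 160n + 32 and p₃(n) := 123n² − 128n + 32, the series identity ∑_{n≥1} (−1/2^10)^n · ((1)_n)^5 / ((1/2)_n)^5 · [ p₃(n)/(2 n^6) − (H_n − H_{2n}) p₀(n)/n^5 ] = −π⁴/60 holds. -/
open Finset Filter Topology

/-- A summation principle for Wilf–Zeilberger pairs: if `F (n+1) k - F n k = G n (k+1) - G n k`,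
the series `∑ₖ F n k` tend to zero with `n` and `G n k` tends to zero with `k`, then the partial
sums of `G n 0` tend to `∑ₖ F 0 k`. -/
theorem tendsto_sum_of_wz_pair {F G : ℕ → ℕ → ℝ}
    (hFG : ∀ n k, F (n + 1) k - F n k = G n (k + 1) - G n k)
    (hF : ∀ n, Summable (F n)) (hF0 : Tendsto (fun n => ∑' k, F n k) atTop (𝓝 0))
    (hG : ∀ n, Tendsto (G n) atTop (𝓝 0)) :
    Tendsto (fun N => ∑ n ∈ range N, G n 0) atTop (𝓝 (∑' k, F 0 k)) := by
  have finite (N K : ℕ) : ∑ k ∈ range K, F N k + ∑ n ∈ range N, G n 0 =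
      ∑ k ∈ range K, F 0 k + ∑ n ∈ range N, G n K := by
    induction N with
    | zero => simp
    | succ N ih =>
      have step : ∑ k ∈ range K, (F (N + 1) k - F N k) = G N K - G N 0 := by
        simp_rw [hFG]
        exact sum_range_sub (G N) K
      rw [sum_sub_distrib] at step
      rw [sum_range_succ, sum_range_succ]
      linarith
  have partialSum (N : ℕ) : ∑ n ∈ range N, G n 0 = ∑' k, F 0 k - ∑' k, F N k := by
    have left := (hF N).hasSum.tendsto_sum_nat.add_const (∑ n ∈ range N, G n 0)
    have right := (hF 0).hasSum.tendsto_sum_nat.add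
      (tendsto_finsetSum (range N) fun n _ => hG n)
    simp_rw [finite] at left
    have := tendsto_nhds_unique left right
    simp only [sum_const_zero, add_zero] at this
    linarith
  simp_rw [partialSum]
  simpa using hF0.const_sub (∑' k, F 0 k)

namespace ZetaFourWZ

/-- The polynomial part of the companion of the Wilf–Zeilberger pair. -/
def certPoly (j x : ℝ) : ℝ :=
  2 * j * x ^ 6 + j * (26 * j - 4) * x ^ 5 + j * (141 * j ^ 2 - 42 * j + 2) * x ^ 4 +
    j ^ 2 * (408 * j ^ 2 - 176 * j + 16) * x ^ 3 + j ^ 3 * (664 * j ^ 2 - 368 * j + 48) * x ^ 2 +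
    j ^ 4 * (574 * j ^ 2 - 384 * j + 64) * x + j ^ 5 * (205 * j ^ 2 - 160 * j + 32)

/-- The derivative of `certPoly` in its second argument. -/
def certPolyDeriv (j x : ℝ) : ℝ :=
  12 * j * x ^ 5 + 5 * j * (26 * j - 4) * x ^ 4 + 4 * j * (141 * j ^ 2 - 42 * j + 2) * x ^ 3 +
    3 * j ^ 2 * (408 * j ^ 2 - 176 * j + 16) * x ^ 2 +
    2 * j ^ 3 * (664 * j ^ 2 - 368 * j + 48) * x + j ^ 4 * (574 * j ^ 2 - 384 * j + 64)

/-- The derivative in `k` of `(-1)ⁿ n!⁶ / (2n)! * ((n+k)! / (2n+k+1)!)⁴ * (2k+3n+2)`. -/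
noncomputable def kernel (n k : ℕ) : ℝ :=
  (-1) ^ n * (n.factorial : ℝ) ^ 6 / (2 * n).factorial *
    (((n + k).factorial : ℝ) / (2 * n + k + 1).factorial) ^ 4 *
    (2 + 4 * (2 * k + 3 * n + 2) * (genHarmonic 1 (n + k) - genHarmonic 1 (2 * n + k + 1)))

/-- The derivative in `k` of `(-1)ⁿ n!⁶ / (2n+2)! * ((n+k)! / (2n+k+2)!)⁴ * certPoly (n+1) k`. -/
noncomputable def companion (n k : ℕ) : ℝ :=
  (-1) ^ n * (n.factorial : ℝ) ^ 6 / (2 * n + 2).factorial *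
    (((n + k).factorial : ℝ) / (2 * n + k + 2).factorial) ^ 4 *
    (certPolyDeriv (n + 1) k + 4 * certPoly (n + 1) k *
      (genHarmonic 1 (n + k) - genHarmonic 1 (2 * n + k + 2)))

theorem genHarmonic_one_succ (n : ℕ) : genHarmonic 1 (n + 1) = genHarmonic 1 n + 1 / (n + 1) := by
  simp [genHarmonic, sum_range_succ]

theorem factorial_succ_cast (n : ℕ) : ((n + 1).factorial : ℝ) = (n + 1) * n.factorial := by
  rw [Nat.factorial_succ]; push_cast; ring

theorem kernel_succ_sub (n k : ℕ) :
    kernel (n + 1) k - kernel n k = companion n (k + 1) - companion n k := by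
  have e₁ : n + 1 + k = n + k + 1 := by ring
  have e₂ : 2 * n + 1 + 1 + k + 1 = 2 * n + k + 1 + 1 + 1 := by ring
  have e₃ : 2 * (n + 1) = 2 * n + 1 + 1 := by ring
  have e₄ : n + (k + 1) = n + k + 1 := by ring
  have e₅ : 2 * n + (k + 1) + 2 = 2 * n + k + 1 + 1 + 1 := by ring
  have e₆ : 2 * n + k + 2 = 2 * n + k + 1 + 1 := by ring
  have e₇ : 2 * n + 2 = 2 * n + 1 + 1 := by ring
  simp only [kernel, companion, e₁, e₂, e₃, e₄, e₅, e₆, e₇]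
  simp only [factorial_succ_cast (n + k), factorial_succ_cast (2 * n + k + 1 + 1),
    factorial_succ_cast (2 * n + k + 1), factorial_succ_cast (2 * n + 1),
    factorial_succ_cast (2 * n), factorial_succ_cast n, genHarmonic_one_succ (n + k),
    genHarmonic_one_succ (2 * n + k + 1), genHarmonic_one_succ (2 * n + k + 1 + 1)]
  have hn : (n.factorial : ℝ) ≠ 0 := by positivity
  have hd : ((2 * n).factorial : ℝ) ≠ 0 := by positivity
  have hb : ((2 * n + k + 1).factorial : ℝ) ≠ 0 := by positivity
  generalize ((n + k).factorial : ℝ) = a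
  generalize ((2 * n + k + 1).factorial : ℝ) = b at *
  generalize ((2 * n).factorial : ℝ) = d at *
  generalize (n.factorial : ℝ) = c at *
  generalize genHarmonic 1 (n + k) = g
  generalize genHarmonic 1 (2 * n + k + 1) = h
  simp only [certPoly, certPolyDeriv, pow_succ (-1 : ℝ) n]
  generalize (-1 : ℝ) ^ n = s
  push_cast
  obtain ⟨x, hx⟩ : ∃ x, x = (n : ℝ) + k + 1 := ⟨_, rfl⟩
  obtain ⟨y, hy⟩ : ∃ y, y = 2 * (n : ℝ) + k + 1 + 1 := ⟨_, rfl⟩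
  have hx0 : x ≠ 0 := by rw [hx]; positivity
  have hy0 : y ≠ 0 := by rw [hy]; positivity
  have hz0 : y + 1 ≠ 0 := by rw [hy]; positivity
  obtain ⟨u, hu⟩ : ∃ u, u = 2 * (n : ℝ) + 1 := ⟨_, rfl⟩
  have hu0 : u ≠ 0 := by rw [hu]; positivity
  have hv0 : u + 1 ≠ 0 := by rw [hu]; positivity
  rw [← hx, ← hy, ← hu]
  field_simp
  rw [hx, hy, hu]
  ring

theorem abs_genHarmonic_one_sub_le (a m : ℕ) :
    |genHarmonic 1 a - genHarmonic 1 (a + m)| ≤ m / (a + 1) := by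
  rw [abs_sub_comm]
  have : genHarmonic 1 (a + m) - genHarmonic 1 a =
      ∑ i ∈ range m, 1 / (((a + i : ℕ) : ℝ) + 1) := by
    simp [genHarmonic, sum_range_add]
  rw [this, abs_of_nonneg (by positivity)]
  calc ∑ i ∈ range m, 1 / (((a + i : ℕ) : ℝ) + 1) ≤ ∑ i ∈ range m, 1 / ((a : ℝ) + 1) := by
        gcongr; omega
    _ = m / (a + 1) := by simp [div_eq_mul_inv]

theorem abs_certPoly_le (n k : ℕ) :
    |certPoly (n + 1) k| ≤ 300 * (n + 1) * ((n : ℝ) + k + 1) ^ 6 := by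
  rw [abs_of_nonneg]
  · rw [← sub_nonneg, certPoly]
    ring_nf
    positivity
  · rw [certPoly]
    ring_nf
    positivity

theorem abs_certPolyDeriv_le (n k : ℕ) :
    |certPolyDeriv (n + 1) k| ≤ 600 * (n + 1) * ((n : ℝ) + k + 1) ^ 6 := by
  rw [abs_of_nonneg]
  · rw [← sub_nonneg, certPolyDeriv]
    ring_nf
    positivity
  · rw [certPolyDeriv]
    ring_nf
    positivity

theorem factorial_div_le (n k : ℕ) :
    ((n + k).factorial : ℝ) / (2 * n + k + 1).factorial ≤
      1 / (((n : ℝ) + k + 1) * n.factorial) := by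
  rw [div_le_div_iff₀ (by positivity) (by positivity), one_mul]
  have := Nat.le_of_dvd (Nat.factorial_pos _)
    (Nat.factorial_mul_factorial_dvd_factorial_add (n + k + 1) n)
  rw [show n + k + 1 + n = 2 * n + k + 1 by ring] at this
  have cast : ((n + k + 1).factorial : ℝ) * n.factorial ≤ (2 * n + k + 1).factorial := by
    exact_mod_cast this
  rw [factorial_succ_cast] at cast
  push_cast at cast
  linarith

theorem factorial_div_le_sq (n k : ℕ) :
    ((n + k).factorial : ℝ) / (2 * n + k + 2).factorial ≤
      1 / (((n : ℝ) + k + 1) ^ 2 * n.factorial) := by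
  have h : (n : ℝ) + k + 1 ≤ ((2 * n + k + 1 : ℕ) : ℝ) + 1 := by
    push_cast; linarith [(n.cast_nonneg : (0 : ℝ) ≤ n)]
  calc ((n + k).factorial : ℝ) / (2 * n + k + 2).factorial
      = 1 / (((2 * n + k + 1 : ℕ) : ℝ) + 1) *
          ((n + k).factorial / (2 * n + k + 1).factorial) := by
        rw [show 2 * n + k + 2 = 2 * n + k + 1 + 1 by ring, factorial_succ_cast]
        field_simp
    _ ≤ 1 / ((n : ℝ) + k + 1) * (1 / (((n : ℝ) + k + 1) * n.factorial)) := by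
        exact mul_le_mul (one_div_le_one_div_of_le (by positivity) h) (factorial_div_le n k)
          (by positivity) (by positivity)
    _ = 1 / (((n : ℝ) + k + 1) ^ 2 * n.factorial) := by field_simp

theorem factorial_sq_le (n : ℕ) : (n.factorial : ℝ) ^ 2 ≤ (2 * n).factorial := by
  have := Nat.le_of_dvd (Nat.factorial_pos _)
    (Nat.factorial_mul_factorial_dvd_factorial_add n n)
  rw [← two_mul, ← sq] at this
  exact_mod_cast this

theorem abs_kernel_le (n k : ℕ) : |kernel n k| ≤ 20 / ((n : ℝ) + k + 1) ^ 3 := by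
  have hL : |genHarmonic 1 (n + k) - genHarmonic 1 (2 * n + k + 1)| ≤ 1 := by
    have := abs_genHarmonic_one_sub_le (n + k) (n + 1)
    rw [show n + k + (n + 1) = 2 * n + k + 1 by ring] at this
    refine this.trans ?_
    rw [div_le_one (by positivity)]
    push_cast
    linarith [(k.cast_nonneg : (0 : ℝ) ≤ k)]
  have hbracket : |2 + 4 * (2 * (k : ℝ) + 3 * n + 2) *
      (genHarmonic 1 (n + k) - genHarmonic 1 (2 * n + k + 1))| ≤ 20 * ((n : ℝ) + k + 1) := by
    calc _ ≤ |(2 : ℝ)| + |4 * (2 * (k : ℝ) + 3 * n + 2)| *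
          |genHarmonic 1 (n + k) - genHarmonic 1 (2 * n + k + 1)| := by
          rw [← abs_mul]; exact abs_add_le _ _
      _ ≤ 2 + 4 * (2 * (k : ℝ) + 3 * n + 2) * 1 := by
          rw [abs_of_nonneg (by positivity : (0 : ℝ) ≤ 2),
            abs_of_nonneg (by positivity : 0 ≤ 4 * (2 * (k : ℝ) + 3 * n + 2))]
          gcongr
      _ ≤ _ := by linarith [(n.cast_nonneg : (0 : ℝ) ≤ n), (k.cast_nonneg : (0 : ℝ) ≤ k)]
  rw [kernel, abs_mul, abs_mul, abs_div, abs_mul, abs_pow, abs_neg, abs_one, one_pow, one_mul,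
    abs_of_nonneg (by positivity : 0 ≤ (n.factorial : ℝ) ^ 6), Nat.abs_cast,
    abs_of_nonneg (by positivity :
      0 ≤ (((n + k).factorial : ℝ) / (2 * n + k + 1).factorial) ^ 4)]
  calc _ ≤ (n.factorial : ℝ) ^ 6 / (n.factorial : ℝ) ^ 2 *
        (1 / (((n : ℝ) + k + 1) * n.factorial)) ^ 4 * (20 * ((n : ℝ) + k + 1)) := by
        gcongr _ / ?_ * ?_ ^ 4 * ?_
        · exact factorial_sq_le n
        · exact factorial_div_le n k
    _ = 20 / ((n : ℝ) + k + 1) ^ 3 := by field_simp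

theorem abs_companion_le (n k : ℕ) : |companion n k| ≤ 3000 / ((n : ℝ) + k + 1) ^ 2 := by
  have hL : |genHarmonic 1 (n + k) - genHarmonic 1 (2 * n + k + 2)| ≤ 2 := by
    have := abs_genHarmonic_one_sub_le (n + k) (n + 2)
    rw [show n + k + (n + 2) = 2 * n + k + 2 by ring] at this
    refine this.trans ?_
    rw [div_le_iff₀ (by positivity)]
    push_cast
    linarith [(n.cast_nonneg : (0 : ℝ) ≤ n), (k.cast_nonneg : (0 : ℝ) ≤ k)]
  have hbracket : |certPolyDeriv (n + 1) k + 4 * certPoly (n + 1) k *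
      (genHarmonic 1 (n + k) - genHarmonic 1 (2 * n + k + 2))| ≤
      3000 * (n + 1) * ((n : ℝ) + k + 1) ^ 6 := by
    calc _ ≤ |certPolyDeriv (n + 1) k| + 4 * |certPoly (n + 1) k| *
          |genHarmonic 1 (n + k) - genHarmonic 1 (2 * n + k + 2)| := by
          refine (abs_add_le _ _).trans_eq ?_
          rw [abs_mul, abs_mul, abs_of_nonneg (by norm_num : (0 : ℝ) ≤ 4)]
      _ ≤ 600 * (n + 1) * ((n : ℝ) + k + 1) ^ 6 +
          4 * (300 * (n + 1) * ((n : ℝ) + k + 1) ^ 6) * 2 := by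
          gcongr
          · exact abs_certPolyDeriv_le n k
          · exact abs_certPoly_le n k
      _ = _ := by ring
  have hfac : (n.factorial : ℝ) ^ 2 * (n + 1) ≤ (2 * n + 2).factorial := by
    rw [factorial_succ_cast, factorial_succ_cast]
    push_cast
    have : (1 : ℝ) * (n + 1) ≤ (2 * n + 1 + 1) * (2 * n + 1) := by
      nlinarith [(n.cast_nonneg : (0 : ℝ) ≤ n)]
    calc (n.factorial : ℝ) ^ 2 * (n + 1) ≤
          (2 * n).factorial * ((2 * n + 1 + 1) * (2 * n + 1)) :=
        mul_le_mul (factorial_sq_le n) (by linarith) (by positivity) (by positivity)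
      _ = _ := by ring
  rw [companion, abs_mul, abs_mul, abs_div, abs_mul, abs_pow, abs_neg, abs_one, one_pow, one_mul,
    abs_of_nonneg (by positivity : 0 ≤ (n.factorial : ℝ) ^ 6), Nat.abs_cast,
    abs_of_nonneg (by positivity :
      0 ≤ (((n + k).factorial : ℝ) / (2 * n + k + 2).factorial) ^ 4)]
  calc _ ≤ (n.factorial : ℝ) ^ 6 / ((n.factorial : ℝ) ^ 2 * (n + 1)) *
        (1 / (((n : ℝ) + k + 1) ^ 2 * n.factorial)) ^ 4 *
        (3000 * (n + 1) * ((n : ℝ) + k + 1) ^ 6) := by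
        gcongr _ / ?_ * ?_ ^ 4 * ?_
        exact factorial_div_le_sq n k
    _ = 3000 / ((n : ℝ) + k + 1) ^ 2 := by field_simp

theorem summable_one_div_succ_sq : Summable fun k : ℕ => 1 / ((k : ℝ) + 1) ^ 2 := by
  have := (summable_nat_add_iff 1).2 (Real.summable_one_div_nat_pow.2 one_lt_two)
  simpa using this

theorem abs_kernel_le_mul (n k : ℕ) :
    |kernel n k| ≤ 20 / ((n : ℝ) + 1) * (1 / ((k : ℝ) + 1) ^ 2) := by
  refine (abs_kernel_le n k).trans ?_
  rw [div_mul_div_comm, mul_one]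
  gcongr
  calc ((n : ℝ) + 1) * ((k : ℝ) + 1) ^ 2 ≤ ((n : ℝ) + k + 1) * ((n : ℝ) + k + 1) ^ 2 := by
        gcongr <;> linarith [(n.cast_nonneg : (0 : ℝ) ≤ n), (k.cast_nonneg : (0 : ℝ) ≤ k)]
    _ = _ := by ring

theorem summable_kernel (n : ℕ) : Summable (kernel n) :=
  .of_norm_bounded (summable_one_div_succ_sq.mul_left _) (abs_kernel_le_mul n)

theorem tendsto_tsum_kernel : Tendsto (fun n => ∑' k, kernel n k) atTop (𝓝 0) := by
  refine squeeze_zero_norm (fun n => tsum_of_norm_bounded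
    (summable_one_div_succ_sq.hasSum.mul_left _) (abs_kernel_le_mul n)) ?_
  have := (tendsto_one_div_add_atTop_nhds_zero_nat (𝕜 := ℝ)).const_mul
    (20 * ∑' k : ℕ, 1 / ((k : ℝ) + 1) ^ 2)
  rw [mul_zero] at this
  refine this.congr fun n => ?_
  ring

theorem tendsto_companion (n : ℕ) : Tendsto (companion n) atTop (𝓝 0) := by
  have h := (summable_one_div_succ_sq.tendsto_atTop_zero).const_mul 3000
  rw [mul_zero] at h
  refine squeeze_zero_norm (fun k => (abs_companion_le n k).trans ?_) h
  rw [mul_one_div]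
  gcongr
  linarith [(n.cast_nonneg : (0 : ℝ) ≤ n)]

theorem summable_companion_zero : Summable fun n => companion n 0 := by
  refine .of_norm_bounded (summable_one_div_succ_sq.mul_left 3000) fun n => ?_
  simpa [div_eq_mul_inv] using abs_companion_le n 0

theorem kernel_zero (k : ℕ) : kernel 0 k = -6 * (1 / ((k + 1 : ℕ) : ℝ) ^ 4) := by
  simp only [kernel, Nat.mul_zero, Nat.zero_add, factorial_succ_cast, genHarmonic_one_succ]
  push_cast [Nat.factorial_zero]
  field_simp
  ring

theorem tsum_kernel_zero : ∑' k, kernel 0 k = -Real.pi ^ 4 / 15 := by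
  have h := (hasSum_nat_add_iff' 1).2 hasSum_zeta_four
  simp only [sum_range_one, Nat.cast_zero, ne_eq, OfNat.ofNat_ne_zero, not_false_eq_true,
    zero_pow, div_zero, sub_zero] at h
  simp_rw [kernel_zero]
  rw [(h.mul_left (-6)).tsum_eq]
  ring

theorem hasSum_companion_zero : HasSum (fun n => companion n 0) (-Real.pi ^ 4 / 15) := by
  have h := tendsto_sum_of_wz_pair kernel_succ_sub summable_kernel tendsto_tsum_kernel
    tendsto_companion
  rw [tsum_kernel_zero] at h
  exact summable_companion_zero.hasSum_iff_tendsto_nat.2 h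

theorem risingFactorial_one (n : ℕ) : risingFactorial 1 n = n.factorial := by
  induction n with
  | zero => simp [risingFactorial]
  | succ n ih =>
    rw [factorial_succ_cast, ← ih, risingFactorial, prod_range_succ, ← risingFactorial]
    ring

theorem risingFactorial_half (n : ℕ) :
    risingFactorial (1 / 2) n = (2 * n).factorial / (4 ^ n * n.factorial) := by
  induction n with
  | zero => simp [risingFactorial]
  | succ n ih =>
    rw [risingFactorial, prod_range_succ, ← risingFactorial, ih, factorial_succ_cast n,
      show 2 * (n + 1) = 2 * n + 1 + 1 by ring, factorial_succ_cast, factorial_succ_cast]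
    push_cast
    field_simp
    ring

theorem summand_eq_companion (n : ℕ) :
    (-1 / 2 ^ 10 : ℝ) ^ (n + 1) * (risingFactorial 1 (n + 1)) ^ 5 /
        (risingFactorial (1 / 2) (n + 1)) ^ 5 *
        ((123 * ((n : ℝ) + 1) ^ 2 - 128 * ((n : ℝ) + 1) + 32) / (2 * ((n : ℝ) + 1) ^ 6) -
          (genHarmonic 1 (n + 1) - genHarmonic 1 (2 * (n + 1))) *
            (205 * ((n : ℝ) + 1) ^ 2 - 160 * ((n : ℝ) + 1) + 32) / ((n : ℝ) + 1) ^ 5) =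
      companion n 0 / 4 := by
  have hpow : (-1 / 2 ^ 10 : ℝ) ^ (n + 1) = -(-1) ^ n / (4 ^ (n + 1)) ^ 5 := by
    rw [div_pow, ← pow_mul, ← pow_mul, show (4 : ℝ) = 2 ^ 2 by norm_num, ← pow_mul, pow_succ]
    ring_nf
  rw [risingFactorial_one, risingFactorial_half, hpow, factorial_succ_cast n,
    genHarmonic_one_succ n, companion, certPoly, certPolyDeriv, show 2 * (n + 1) = 2 * n + 2 by ring]
  simp only [Nat.add_zero, Nat.cast_zero]
  field_simp
  ring

end ZetaFourWZ

/-- With `p₀(n) = 205n²−160n+32` and `p₃(n) = 123n²−128n+32`: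
`∑_{n≥1} (−1/2^10)^n (1)ₙ^5/(1/2)ₙ^5 [ p₃(n)/(2n^6) − (Hₙ − H_{2n})p₀(n)/n^5 ] = −π⁴/60`. -/
theorem wz_pi4_60_series :
    ∑' n : ℕ, ((-1 / 2 ^ 10 : ℝ) ^ (n + 1) * (risingFactorial 1 (n + 1)) ^ 5 /
        (risingFactorial (1 / 2) (n + 1)) ^ 5 *
        ((123 * ((n : ℝ) + 1) ^ 2 - 128 * ((n : ℝ) + 1) + 32) / (2 * ((n : ℝ) + 1) ^ 6) -
          (genHarmonic 1 (n + 1) - genHarmonic 1 (2 * (n + 1))) *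
            (205 * ((n : ℝ) + 1) ^ 2 - 160 * ((n : ℝ) + 1) + 32) / ((n : ℝ) + 1) ^ 5))
      = -Real.pi ^ 4 / 60 := by
  simp_rw [ZetaFourWZ.summand_eq_companion]
  rw [(ZetaFourWZ.hasSum_companion_zero.div_const 4).tsum_eq]
  ring
end
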